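/- arXiv:1507.04838 — 2 statements merged into one kernel-verified Lean document; each statement's English description precedes it below -/
import Mathlib

section
/- Let k be a field and ξ ∈ k ∖ {0} not a root of unity. Then the idempotents of the twisted Motzkin monoid coincide with the idempotents of the twisted Jones monoid: E(M_n^ξ) = E(J_n^ξ). -/
open Relation

/-! ### The partition monoid and its planar submonoids -/

/-- Vertices of a partition diagram: `Sum.inl i` is the upper vertex `i`,
`Sum.inr i` is the lower vertex `i′`. -/
abbrev PV (n : ℕ) := Fin n ⊕ Fin n

/-- An element of the partition monoid `P_n`: a set partition of the `2n` vertices,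
encoded as an equivalence relation (setoid). -/
abbrev PElt (n : ℕ) := Setoid (PV n)

/-- Three layers of vertices, used to form products. -/
abbrev TV (n : ℕ) := Fin n ⊕ (Fin n ⊕ Fin n)

/-- Embedding of the vertices of the upper factor into the three layers. -/
def upEmb {n : ℕ} : PV n → TV n
  | .inl i => .inl i
  | .inr i => .inr (.inl i)

/-- Embedding of the vertices of the lower factor into the three layers. -/
def downEmb {n : ℕ} : PV n → TV n
  | .inl i => .inr (.inl i)
  | .inr i => .inr (.inr i)

/-- Embedding of the vertices of the product into the three layers. -/
def outEmb {n : ℕ} : PV n → TV n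
  | .inl i => .inl i
  | .inr i => .inr (.inr i)

/-- The stacked graph of `a` on `b`: relations of `a` on layers 1–2 together with
relations of `b` on layers 2–3. -/
def stackRel {n : ℕ} (a b : PElt n) : TV n → TV n → Prop := fun x y =>
  (∃ p q : PV n, a.r p q ∧ x = upEmb p ∧ y = upEmb q) ∨
  (∃ p q : PV n, b.r p q ∧ x = downEmb p ∧ y = downEmb q)

/-- The finest common coarsening (transitive closure) of the stacked graph. -/
def stackSetoid {n : ℕ} (a b : PElt n) : Setoid (TV n) :=
  EqvGen.setoid (stackRel a b)

/-- The product in the partition monoid: restrict the coarsening of the stacked graph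
to the outer two layers. -/
def pmul {n : ℕ} (a b : PElt n) : PElt n :=
  Setoid.comap outEmb (stackSetoid a b)

/-- The identity of the partition monoid: blocks `{i, i′}`. -/
def pid (n : ℕ) : PElt n :=
  ⟨fun x y => Sum.elim id id x = Sum.elim id id y,
    ⟨fun _ => rfl, fun h => h.symm, fun h₁ h₂ => h₁.trans h₂⟩⟩

/-- A vertex of the triple-layer graph lies in the identified middle row. -/
def isMiddle {n : ℕ} : TV n → Prop
  | .inr (.inl _) => True
  | _ => False

/-- `m(a,b)`: the number of floating components (components of the stacked graph of `a` on `b`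
contained entirely in the identified middle row). -/
noncomputable def floatCount {n : ℕ} (a b : PElt n) : ℕ :=
  Nat.card {c : Quotient (stackSetoid a b) //
    ∀ x : TV n, Quotient.mk (stackSetoid a b) x = c → isMiddle x}

/-- A block (equivalence class) is a transversal if it contains both an upper
and a lower vertex. -/
def IsTransClass {n : ℕ} (a : PElt n) (c : Quotient a) : Prop :=
  (∃ i : Fin n, Quotient.mk a (.inl i) = c) ∧ (∃ j : Fin n, Quotient.mk a (.inr j) = c)

/-- The rank of a partition: the number of transversal blocks. -/
noncomputable def prank {n : ℕ} (a : PElt n) : ℕ :=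
  Nat.card {c : Quotient a // IsTransClass a c}

/-- Position of a vertex in the boundary order `1, …, n, n′, …, 1′` of the rectangle. -/
def ordIdx (n : ℕ) : PV n → ℕ
  | .inl i => i.val
  | .inr i => 2 * n - 1 - i.val

/-- Planarity: the partition is non-crossing with respect to the boundary order
`1 < ⋯ < n < n′ < ⋯ < 1′`. -/
def IsPlanar {n : ℕ} (a : PElt n) : Prop :=
  ¬ ∃ w x y z : PV n, ordIdx n w < ordIdx n x ∧ ordIdx n x < ordIdx n y ∧
      ordIdx n y < ordIdx n z ∧ a.r w y ∧ a.r x z ∧ ¬ a.r w x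

/-- The size of the block containing a given vertex. -/
noncomputable def blockCard {n : ℕ} (a : PElt n) (x : PV n) : ℕ :=
  Nat.card {y : PV n // a.r x y}

/-- The Motzkin monoid: planar partitions with all blocks of size at most 2. -/
def Motzkin (n : ℕ) : Set (PElt n) :=
  {a | IsPlanar a ∧ ∀ x : PV n, blockCard a x ≤ 2}

/-- The Jones (Temperley–Lieb) monoid: planar partitions with all blocks of size
exactly 2. -/
def Jones (n : ℕ) : Set (PElt n) :=
  {a | IsPlanar a ∧ ∀ x : PV n, blockCard a x = 2}

/-! ### The interface graph -/

/-- Lower edge of the interface graph `Γ(a)`: a block `{i,j}` of `a` on upper vertices. -/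
def LowEdge {n : ℕ} (a : PElt n) (i j : Fin n) : Prop :=
  i ≠ j ∧ a.r (.inl i) (.inl j)

/-- Upper edge of the interface graph `Γ(a)`: a block `{i′,j′}` of `a` on lower vertices. -/
def UpEdge {n : ℕ} (a : PElt n) (i j : Fin n) : Prop :=
  i ≠ j ∧ a.r (.inr i) (.inr j)

/-- Vertex `i` of `Γ(a)` carries a lower edge. -/
def hasLow {n : ℕ} (a : PElt n) (i : Fin n) : Prop := ∃ j, LowEdge a i j

/-- Vertex `i` of `Γ(a)` carries an upper edge. -/
def hasUp {n : ℕ} (a : PElt n) (i : Fin n) : Prop := ∃ j, UpEdge a i j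

/-- Vertex `i` is active downwards: the upper vertex `i` lies in a transversal of `a`. -/
def activeDown {n : ℕ} (a : PElt n) (i : Fin n) : Prop := ∃ j : Fin n, a.r (.inl i) (.inr j)

/-- Vertex `i` is active upwards: the lower vertex `i′` lies in a transversal of `a`. -/
def activeUp {n : ℕ} (a : PElt n) (i : Fin n) : Prop := ∃ j : Fin n, a.r (.inr i) (.inl j)

/-- Vertex `i` is inert downwards: the upper vertex `i` is a singleton block of `a`. -/
def inertDown {n : ℕ} (a : PElt n) (i : Fin n) : Prop := ∀ y, a.r (.inl i) y → y = .inl i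

/-- Vertex `i` is inert upwards: the lower vertex `i′` is a singleton block of `a`. -/
def inertUp {n : ℕ} (a : PElt n) (i : Fin n) : Prop := ∀ y, a.r (.inr i) y → y = .inr i

/-- Adjacency in the interface graph `Γ(a)`. -/
def gedge {n : ℕ} (a : PElt n) (i j : Fin n) : Prop := LowEdge a i j ∨ UpEdge a i j

/-- Connectivity in the interface graph `Γ(a)`. -/
def gconn {n : ℕ} (a : PElt n) : Fin n → Fin n → Prop := EqvGen (gedge a)

/-- `θ` is (the vertex set of) a connected component of `Γ(a)`. -/
def IsComp {n : ℕ} (a : PElt n) (θ : Set (Fin n)) : Prop :=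
  θ.Nonempty ∧ ∀ i ∈ θ, ∀ j : Fin n, (gconn a i j ↔ j ∈ θ)

/-- `θ` is a cycle component of `Γ(a)`: every vertex carries both a lower and an upper edge. -/
def IsCycleComp {n : ℕ} (a : PElt n) (θ : Set (Fin n)) : Prop :=
  IsComp a θ ∧ ∀ i ∈ θ, hasLow a i ∧ hasUp a i

/-- `θ` is a path component of `Γ(a)`: some vertex misses an edge on some side. -/
def IsPathComp {n : ℕ} (a : PElt n) (θ : Set (Fin n)) : Prop :=
  IsComp a θ ∧ ∃ i ∈ θ, ¬ hasLow a i ∨ ¬ hasUp a i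

/-- An inert path: every terminus is inert on its free side. -/
def IsInertPathComp {n : ℕ} (a : PElt n) (θ : Set (Fin n)) : Prop :=
  IsPathComp a θ ∧ ∀ i ∈ θ,
    (¬ hasLow a i → inertDown a i) ∧ (¬ hasUp a i → inertUp a i)

/-- A trans-active path: even length (its two free ends lie on opposite sides) with
both termini active on their free sides. -/
def IsTransActivePathComp {n : ℕ} (a : PElt n) (θ : Set (Fin n)) : Prop :=
  IsPathComp a θ ∧
  (∃! i : Fin n, i ∈ θ ∧ ¬ hasLow a i) ∧ (∃! i : Fin n, i ∈ θ ∧ ¬ hasUp a i) ∧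
  ∀ i ∈ θ, (¬ hasLow a i → activeDown a i) ∧ (¬ hasUp a i → activeUp a i)

/-- The number of edges of `Γ(a)` contained in `θ` (its length, for a component `θ`). -/
noncomputable def compEdgeCount {n : ℕ} (a : PElt n) (θ : Set (Fin n)) : ℕ :=
  Nat.card {p : Fin n × Fin n // p.1 < p.2 ∧ p.1 ∈ θ ∧ p.2 ∈ θ ∧ LowEdge a p.1 p.2} +
  Nat.card {p : Fin n × Fin n // p.1 < p.2 ∧ p.1 ∈ θ ∧ p.2 ∈ θ ∧ UpEdge a p.1 p.2}

/-! ### The map `α ↦ α̂` and the sets `D`, `Θ(δ)` -/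

/-- The 0-based position of `i` among the upward-active vertices. -/
noncomputable def posUp {n : ℕ} (a : PElt n) (i : Fin n) : ℕ :=
  Nat.card {j : Fin n // j < i ∧ activeUp a j}

/-- The 0-based position of `i` among the downward-active vertices. -/
noncomputable def posDown {n : ℕ} (a : PElt n) (i : Fin n) : ℕ :=
  Nat.card {j : Fin n // j < i ∧ activeDown a j}

/-- `i` and `j` are consecutive upward-active vertices paired in forming `α̂`
(`i` in an even position `2t`, `j` in position `2t+1 < 2⌊r/2⌋`). -/
noncomputable def pairedUp {n : ℕ} (a : PElt n) (i j : Fin n) : Prop :=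
  activeUp a i ∧ activeUp a j ∧ Even (posUp a i) ∧ posUp a j = posUp a i + 1 ∧
    posUp a j < 2 * (prank a / 2)

/-- `i` and `j` are consecutive downward-active vertices paired in forming `α̂`. -/
noncomputable def pairedDown {n : ℕ} (a : PElt n) (i j : Fin n) : Prop :=
  activeDown a i ∧ activeDown a j ∧ Even (posDown a i) ∧ posDown a j = posDown a i + 1 ∧
    posDown a j < 2 * (prank a / 2)

/-- The transversal relations removed in forming `α̂` (those of the first `2⌊r/2⌋`
transversals). -/
noncomputable def removedTrans {n : ℕ} (a : PElt n) (x y : PV n) : Prop :=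
  ∃ i j : Fin n, a.r (.inl i) (.inr j) ∧ posDown a i < 2 * (prank a / 2) ∧
    ((x = .inl i ∧ y = .inr j) ∨ (x = .inr j ∧ y = .inl i))

/-- The generating relation of `α̂`: the relations of `α` minus the removed transversals,
plus the new blocks pairing consecutive active vertices. -/
noncomputable def hatRel {n : ℕ} (a : PElt n) (x y : PV n) : Prop :=
  (a.r x y ∧ ¬ removedTrans a x y) ∨
  (∃ i j : Fin n, pairedUp a i j ∧
      ((x = .inr i ∧ y = .inr j) ∨ (x = .inr j ∧ y = .inr i))) ∨
  (∃ i j : Fin n, pairedDown a i j ∧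
      ((x = .inl i ∧ y = .inl j) ∨ (x = .inl j ∧ y = .inl i)))

/-- The element `α̂` obtained from `α` by pairing off consecutive active vertices. -/
noncomputable def hat {n : ℕ} (a : PElt n) : PElt n := EqvGen.setoid (hatRel a)

/-- The idempotents of a subset `S` (with respect to the partition product). -/
def Eset {n : ℕ} (S : Set (PElt n)) : Set (PElt n) := {a ∈ S | pmul a a = a}

/-- `D(S) = D₀ ∪ E(D₁)`: the idempotents of `S` of rank at most 1. -/
def Dset {n : ℕ} (S : Set (PElt n)) : Set (PElt n) :=
  {d ∈ S | pmul d d = d ∧ prank d ≤ 1}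

/-- `θ` lies (entirely) to the left of the leftmost transversal of `a`. -/
def LeftOfTrans {n : ℕ} (a : PElt n) (θ : Set (Fin n)) : Prop :=
  ∀ i ∈ θ, ∀ j : Fin n, activeDown a j ∨ activeUp a j → i < j

/-- `Θ(a)`: the cycle components of `Γ(a)` lying entirely to the left of the leftmost
transversal. -/
def ThetaSet {n : ℕ} (a : PElt n) : Set (Set (Fin n)) :=
  {θ | IsCycleComp a θ ∧ LeftOfTrans a θ}

/-! ### Returns, special pairs and `θ`-covers -/

/-- The block `{i,j}` of `a` on upper vertices is an upper return: no upper block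
`{k,l}` has `k<i<j<l`, and no transversal contains an upper vertex smaller than `i`. -/
def UpperReturn {n : ℕ} (a : PElt n) (i j : Fin n) : Prop :=
  i < j ∧ a.r (.inl i) (.inl j) ∧
  (¬ ∃ k l : Fin n, k < i ∧ j < l ∧ a.r (.inl k) (.inl l)) ∧
  (¬ ∃ k : Fin n, k < i ∧ activeDown a k)

/-- The block `{i′,j′}` of `a` on lower vertices is a lower return. -/
def LowerReturn {n : ℕ} (a : PElt n) (i j : Fin n) : Prop :=
  i < j ∧ a.r (.inr i) (.inr j) ∧
  (¬ ∃ k l : Fin n, k < i ∧ j < l ∧ a.r (.inr k) (.inr l)) ∧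
  (¬ ∃ k : Fin n, k < i ∧ activeUp a k)

/-- The interface-graph adjacency of `a` after deleting the lower-vertex block `{i′,j′}`
and the upper-vertex block `{k,l}`. -/
def redEdge {n : ℕ} (a : PElt n) (i j k l : Fin n) (u v : Fin n) : Prop :=
  (LowEdge a u v ∧ ({u, v} : Set (Fin n)) ≠ {k, l}) ∨
  (UpEdge a u v ∧ ({u, v} : Set (Fin n)) ≠ {i, j})

/-- The relation generating the `θ`-cover `a − (e′,f)`, for `e′ = {i′,j′}` and
`f = {k,l}`: delete the two blocks, and join each freed upper vertex to the freed lower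
vertex reached along its path. -/
def coverRel {n : ℕ} (a : PElt n) (i j k l : Fin n) (x y : PV n) : Prop :=
  (a.r x y ∧ ({x, y} : Set (PV n)) ≠ {.inl k, .inl l} ∧
    ({x, y} : Set (PV n)) ≠ {.inr i, .inr j}) ∨
  (∃ u v : Fin n, u ∈ ({k, l} : Set (Fin n)) ∧ v ∈ ({i, j} : Set (Fin n)) ∧
    EqvGen (redEdge a i j k l) u v ∧
    ((x = .inl u ∧ y = .inr v) ∨ (x = .inr v ∧ y = .inl u)))

/-- The `θ`-cover `a − (e′,f)` as a partition. -/
def coverElt {n : ℕ} (a : PElt n) (i j k l : Fin n) : PElt n :=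
  EqvGen.setoid (coverRel a i j k l)

/-- `b` is a `θ`-cover of `a`: `θ ∈ Θ(a)` and `b = a − (e′,f)` for some special pair
`(e′,f)` over `θ` (one lower-return and one upper-return edge of `θ`). -/
def IsThetaCover {n : ℕ} (a : PElt n) (θ : Set (Fin n)) (b : PElt n) : Prop :=
  θ ∈ ThetaSet a ∧
  ∃ i j k l : Fin n, i ∈ θ ∧ j ∈ θ ∧ k ∈ θ ∧ l ∈ θ ∧
    LowerReturn a i j ∧ UpperReturn a k l ∧ b = coverElt a i j k l

/-- `a ≪_d b`: `a = b` or there is a chain of `θ`-covers from `a` to `b` along pairwise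
distinct cycles `θ ∈ Θ(d)`. -/
def llRel {n : ℕ} (d : PElt n) (a b : PElt n) : Prop :=
  a = b ∨ ∃ (h : ℕ) (θs : Fin h → Set (Fin n)) (as : Fin (h + 1) → PElt n),
    Function.Injective θs ∧ (∀ ι, θs ι ∈ ThetaSet d) ∧
    as 0 = a ∧ as (Fin.last h) = b ∧
    ∀ ι : Fin h, IsThetaCover (as ι.castSucc) (θs ι) (as ι.succ)

/-- The fibre `F_d = {α ∈ E(S) : α̂ = d}`. -/
def Fib {n : ℕ} (S : Set (PElt n)) (d : PElt n) : Set (PElt n) :=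
  {a ∈ Eset S | hat a = d}

/-- `C_d(θ) = C*_d(θ) ∪ {d}`, where `C*_d(θ)` is the set of `θ`-covers of `d`. -/
def CoverSet {n : ℕ} (d : PElt n) (θ : Set (Fin n)) : Set (PElt n) :=
  insert d {b | IsThetaCover d θ b}

/-- `u_θ`: the number of upper-return blocks among the edges of `θ`. -/
noncomputable def uRet {n : ℕ} (a : PElt n) (θ : Set (Fin n)) : ℕ :=
  Nat.card {p : Fin n × Fin n // p.1 ∈ θ ∧ p.2 ∈ θ ∧ UpperReturn a p.1 p.2}

/-- `l_θ`: the number of lower-return blocks among the edges of `θ`. -/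
noncomputable def lRet {n : ℕ} (a : PElt n) (θ : Set (Fin n)) : ℕ :=
  Nat.card {p : Fin n × Fin n // p.1 ∈ θ ∧ p.2 ∈ θ ∧ LowerReturn a p.1 p.2}

/-! ### Twisted semigroup algebras -/

variable {K : Type} [Field K]

/-- The underlying vector space of the semigroup algebra `k[P_n]`. -/
abbrev PAlg (n : ℕ) (K : Type) [Field K] := PElt n →₀ K

/-- The twisted multiplication on `k[P_n]`: on basis elements,
`a ∘ b = ξ^{m(a,b)} · (ab)`, extended bilinearly. -/
noncomputable def twistMul {n : ℕ} (ξ : K) (f g : PAlg n K) : PAlg n K :=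
  f.sum fun a ca => g.sum fun b cb =>
    Finsupp.single (pmul a b) (ca * cb * ξ ^ floatCount a b)

/-- The twisted variant `S^ξ`: the subsemigroup of `(k[S], ∘)` generated by (the basis
elements corresponding to) `S`. -/
def TwistedVariant {n : ℕ} (ξ : K) (S : Set (PElt n)) : Set (PAlg n K) :=
  ⋂₀ {T : Set (PAlg n K) | (∀ a ∈ S, Finsupp.single a (1 : K) ∈ T) ∧
      ∀ f ∈ T, ∀ g ∈ T, twistMul ξ f g ∈ T}

/-- The idempotents of a set of elements of the twisted algebra. -/
def EsetTwist {n : ℕ} (ξ : K) (X : Set (PAlg n K)) : Set (PAlg n K) :=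
  {f ∈ X | twistMul ξ f f = f}

/-- `⟨S^ξ, ξ·1⟩ = {ξ^i·α : i ∈ ℕ, α ∈ S}`. -/
def TwistNat {n : ℕ} (ξ : K) (S : Set (PElt n)) : Set (PAlg n K) :=
  {f | ∃ (i : ℕ), ∃ a ∈ S, f = Finsupp.single a (ξ ^ i)}

/-- `⟨S^ξ, ξ·1, ξ⁻¹·1⟩ = {ξ^i·α : i ∈ ℤ, α ∈ S}`. -/
def TwistInt {n : ℕ} (ξ : K) (S : Set (PElt n)) : Set (PAlg n K) :=
  {f | ∃ (i : ℤ), ∃ a ∈ S, f = Finsupp.single a (ξ ^ i)}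

/-! ### Idempotent statistics of the Jones monoid -/

/-- The number of cycle components of `Γ(a)`. -/
noncomputable def numCycles {n : ℕ} (a : PElt n) : ℕ :=
  Nat.card {θ : Set (Fin n) // IsCycleComp a θ}

/-- The number of path components of `Γ(a)`. -/
noncomputable def numPaths {n : ℕ} (a : PElt n) : ℕ :=
  Nat.card {θ : Set (Fin n) // IsPathComp a θ}

/-- `E_{n;c,p}`: the idempotents of the Jones monoid `J_n` with `c` cycle components and
`p` path components (out-of-range indices give the empty set). -/
def EJcp (n : ℕ) (c p : ℤ) : Set (PElt n) :=
  {a ∈ Jones n | pmul a a = a ∧ (numCycles a : ℤ) = c ∧ (numPaths a : ℤ) = p}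

/-- `e_{n;c,p} = |E_{n;c,p}|`. -/
noncomputable def eJ (n : ℕ) (c p : ℤ) : ℕ := Nat.card (EJcp n c p)

/-- `e_{n;·,p} = Σ_c e_{n;c,p}`: the number of idempotents of `J_n` of rank `p`. -/
noncomputable def eJdot (n : ℕ) (p : ℤ) : ℕ :=
  Nat.card {a : PElt n | a ∈ Jones n ∧ pmul a a = a ∧ (numPaths a : ℤ) = p}

/-- `S^{(1)}_{n;c,p} = Σ_{α ∈ E_{n;c,p}} Σ_{θ ∈ Θ(α)} (u_θ + l_θ)`. -/
noncomputable def S1 (n : ℕ) (c p : ℤ) : ℕ :=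
  ∑ᶠ a ∈ EJcp n c p, ∑ᶠ θ ∈ ThetaSet a, (uRet a θ + lRet a θ)

/-- `S^{(2)}_{n;c,p} = Σ_{α ∈ E_{n;c,p}} Σ_{θ₁ ≠ θ₂ ∈ Θ(α)} u_{θ₁}·l_{θ₂}`
(the inner sum over ordered pairs of distinct cycles). -/
noncomputable def S2 (n : ℕ) (c p : ℤ) : ℕ :=
  ∑ᶠ a ∈ EJcp n c p, ∑ᶠ q ∈ {q : Set (Fin n) × Set (Fin n) |
      q.1 ∈ ThetaSet a ∧ q.2 ∈ ThetaSet a ∧ q.1 ≠ q.2}, uRet a q.1 * lRet a q.2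

/-- `S^{(1)}_{n;·,p}`. -/
noncomputable def S1dot (n : ℕ) (p : ℤ) : ℕ :=
  ∑ᶠ a ∈ {a : PElt n | a ∈ Jones n ∧ pmul a a = a ∧ (numPaths a : ℤ) = p},
    ∑ᶠ θ ∈ ThetaSet a, (uRet a θ + lRet a θ)

/-- `S^{(2)}_{n;·,p}`. -/
noncomputable def S2dot (n : ℕ) (p : ℤ) : ℕ :=
  ∑ᶠ a ∈ {a : PElt n | a ∈ Jones n ∧ pmul a a = a ∧ (numPaths a : ℤ) = p},
    ∑ᶠ q ∈ {q : Set (Fin n) × Set (Fin n) |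
      q.1 ∈ ThetaSet a ∧ q.2 ∈ ThetaSet a ∧ q.1 ≠ q.2}, uRet a q.1 * lRet a q.2

/-!
The components of the stacked graph of two partitions with blocks of size at most 2 have at most
two vertices of degree less than 2; outer vertices are among these, and so are the middle vertices
that form a singleton block of one of the factors. Without floating components, such a middle
vertex is connected to exactly one outer vertex, which is then a singleton block of the product.

An idempotent `ξ ^ i • a` satisfies `ξ ^ (i + m(a, a)) = 1`, hence `i = 0` and `m(a, a) = 0`. A
singleton block of `a` would yield a singleton block of `a = a * a` at an outer vertex that is not
isolated in the stacked graph, which is absurd; so all blocks of `a` have size 2. In a product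
without floating components whose blocks all have size 2, the same holds for both factors, so only
generators in the Brauer monoid are involved. None of this depends on planarity.
-/

/-! ### Components of graphs of maximum degree two -/

theorem card_filter_degree_lt_two_le_two {V : Type*} [Fintype V] {G : SimpleGraph V}
    [DecidableRel G.Adj] (hG : G.Connected) (hdeg : ∀ v, G.degree v ≤ 2) :
    (Finset.univ.filter fun v => G.degree v < 2).card ≤ 2 := by
  have hsum : ∑ v, G.degree v + (Finset.univ.filter fun v => G.degree v < 2).card ≤
      2 * Fintype.card V := by
    rw [Finset.card_filter, ← Finset.sum_add_distrib, mul_comm]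
    refine Finset.sum_le_card_nsmul _ _ 2 fun v _ => ?_
    have := hdeg v
    split_ifs <;> omega
  have hconn := hG.card_vert_le_card_edgeSet_add_one
  rw [Nat.card_eq_fintype_card, Nat.card_eq_fintype_card, ← SimpleGraph.edgeFinset_card] at hconn
  have hhandshake := G.sum_degrees_eq_twice_card_edges
  omega

theorem ncard_degree_lt_two_component_le_two {V : Type*} [Fintype V] {G : SimpleGraph V}
    [DecidableRel G.Adj] (hdeg : ∀ v, G.degree v ≤ 2) (C : G.ConnectedComponent) :
    {v | v ∈ C.supp ∧ G.degree v < 2}.ncard ≤ 2 := by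
  classical
  have hconn : (G.induce C.supp).Connected := C.connected_toSimpleGraph
  have degree_eq (v : C.supp) : (G.induce C.supp).degree v = G.degree v :=
    SimpleGraph.degree_induce_of_neighborSet_subset fun _ hw => (C.mem_supp_congr_adj hw).1 v.2
  have hends := card_filter_degree_lt_two_le_two hconn
    fun v => (degree_eq v).trans_le (hdeg v)
  simp only [degree_eq] at hends
  have hval : {v | v ∈ C.supp ∧ G.degree v < 2} =
      Subtype.val '' {v : C.supp | G.degree (v : V) < 2} :=
    (Subtype.image_preimage_val C.supp {v | G.degree v < 2}).symm
  rw [hval, Set.ncard_image_of_injective _ Subtype.val_injective, Set.ncard_eq_toFinset_card']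
  simpa using hends

theorem eq_of_reachable_of_degree_lt_two {V : Type*} [Fintype V] {G : SimpleGraph V}
    [DecidableRel G.Adj] (hdeg : ∀ v, G.degree v ≤ 2) {x y z : V}
    (hxy : G.Reachable x y) (hxz : G.Reachable x z)
    (hx : G.degree x < 2) (hy : G.degree y < 2) (hz : G.degree z < 2) :
    x = y ∨ x = z ∨ y = z := by
  by_contra! hne
  exact (ncard_degree_lt_two_component_le_two hdeg (G.connectedComponentMk x)).not_gt
    ((Set.two_lt_ncard_iff (Set.toFinite _)).2 ⟨x, y, z, ⟨rfl, hx⟩,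
      ⟨SimpleGraph.ConnectedComponent.sound hxy.symm, hy⟩,
      ⟨SimpleGraph.ConnectedComponent.sound hxz.symm, hz⟩, hne⟩)

/-! ### Brauer and partial Brauer partitions -/

/-- The partial Brauer monoid `PB_n`: partitions all of whose blocks have size at most 2. -/
def PartialBrauer (n : ℕ) : Set (PElt n) :=
  {a | ∀ x, blockCard a x ≤ 2}

/-- The Brauer monoid `B_n`: partitions all of whose blocks have size exactly 2. -/
def Brauer (n : ℕ) : Set (PElt n) :=
  {a | ∀ x, blockCard a x = 2}

section Partition

variable {n : ℕ} {a b : PElt n}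

theorem motzkin_subset_partialBrauer : Motzkin n ⊆ PartialBrauer n :=
  fun _ ha => ha.2

theorem motzkin_inter_brauer : Motzkin n ∩ Brauer n = Jones n :=
  Set.ext fun _ =>
    ⟨fun ha => ⟨ha.1.1, ha.2⟩, fun ha => ⟨⟨ha.1, fun x => (ha.2 x).le⟩, ha.2⟩⟩

theorem blockCard_eq_ncard (a : PElt n) (x : PV n) : blockCard a x = {y | a.r x y}.ncard :=
  rfl

theorem blockCard_le_one_iff {x : PV n} : blockCard a x ≤ 1 ↔ ∀ y, a.r x y → y = x := by
  rw [blockCard_eq_ncard, Set.ncard_le_one]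
  exact ⟨fun h y hy => h y hy x (a.refl x), fun h y hy z hz => (h y hy).trans (h z hz).symm⟩

theorem blockCard_le_two_iff {x : PV n} :
    blockCard a x ≤ 2 ↔ ∀ y z, a.r x y → a.r x z → x = y ∨ x = z ∨ y = z := by
  rw [blockCard_eq_ncard, ← not_lt, Set.two_lt_ncard_iff]
  constructor
  · intro h y z hy hz
    by_contra! hne
    exact h ⟨x, y, z, a.refl x, hy, hz, hne⟩
  · rintro h ⟨u, v, w, hu, hv, hw, huv, huw, hvw⟩
    have := h u v hu hv
    have := h u w hu hw
    have := h v w hv hw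
    grind

theorem exists_blockCard_le_one (ha : a ∈ PartialBrauer n) (ha' : a ∉ Brauer n) :
    ∃ x, blockCard a x ≤ 1 := by
  simp only [Brauer, Set.mem_ofPred_eq, not_forall] at ha'
  obtain ⟨x, hx⟩ := ha'
  have := ha x
  exact ⟨x, by omega⟩

theorem ncard_image_related_ne_add_one_le {V : Type*} (f : PV n → V) (a : PElt n) (x : PV n) :
    (f '' ({y | a.r x y} \ {x})).ncard + 1 ≤ blockCard a x :=
  (Nat.succ_le_succ Set.ncard_image_le).trans_eq (Set.ncard_sdiff_singleton_add_one (a.refl x))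

/-! ### The stacked graph -/

/-- The stacked graph of `a` on `b` as a simple graph, that is, without the loops of `stackRel`. -/
def stackGraph (a b : PElt n) : SimpleGraph (TV n) :=
  SimpleGraph.fromRel (stackRel a b)

noncomputable instance : DecidableRel (stackGraph a b).Adj :=
  Classical.decRel _

theorem stackRel_symm {x y : TV n} : stackRel a b x y → stackRel a b y x := by
  rintro (⟨p, q, h, hp, hq⟩ | ⟨p, q, h, hp, hq⟩)
  · exact Or.inl ⟨q, p, a.symm h, hq, hp⟩
  · exact Or.inr ⟨q, p, b.symm h, hq, hp⟩

theorem stackGraph_adj {x y : TV n} :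
    (stackGraph a b).Adj x y ↔ x ≠ y ∧ stackRel a b x y := by
  rw [stackGraph, SimpleGraph.fromRel_adj, or_iff_left_of_imp stackRel_symm]

theorem reachable_of_stackSetoid {x y : TV n} (h : (stackSetoid a b).r x y) :
    (stackGraph a b).Reachable x y := by
  refine Setoid.eqvGen_le (s := (stackGraph a b).reachableSetoid) (fun x y hxy => ?_) h
  by_cases hne : x = y
  · exact hne ▸ SimpleGraph.Reachable.refl x
  · exact (stackGraph_adj.2 ⟨hne, hxy⟩).reachable

theorem degree_stackGraph_eq_ncard (a b : PElt n) (v : TV n) :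
    (stackGraph a b).degree v = ((stackGraph a b).neighborSet v).ncard := by
  rw [← SimpleGraph.card_neighborSet_eq_degree, ← Nat.card_eq_fintype_card, Nat.card_coe_set_eq]

theorem degree_stackGraph_upper_add_one_le (a b : PElt n) (i : Fin n) :
    (stackGraph a b).degree (.inl i) + 1 ≤ blockCard a (.inl i) := by
  have hsub : (stackGraph a b).neighborSet (.inl i) ⊆
      upEmb '' ({y | a.r (.inl i) y} \ {.inl i}) := by
    intro v hv
    obtain ⟨hne, ⟨p | p, q, h, hp, rfl⟩ | ⟨p | p, q, _, hp, rfl⟩⟩ := stackGraph_adj.1 hv <;>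
      cases hp
    exact ⟨q, ⟨h, by rintro rfl; exact hne rfl⟩, rfl⟩
  rw [degree_stackGraph_eq_ncard]
  exact (Nat.succ_le_succ (Set.ncard_le_ncard hsub)).trans
    (ncard_image_related_ne_add_one_le upEmb a (.inl i))

theorem degree_stackGraph_lower_add_one_le (a b : PElt n) (i : Fin n) :
    (stackGraph a b).degree (.inr (.inr i)) + 1 ≤ blockCard b (.inr i) := by
  have hsub : (stackGraph a b).neighborSet (.inr (.inr i)) ⊆
      downEmb '' ({y | b.r (.inr i) y} \ {.inr i}) := by
    intro v hv
    obtain ⟨hne, ⟨p | p, q, _, hp, rfl⟩ | ⟨p | p, q, h, hp, rfl⟩⟩ := stackGraph_adj.1 hv <;>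
      cases hp
    exact ⟨q, ⟨h, by rintro rfl; exact hne rfl⟩, rfl⟩
  rw [degree_stackGraph_eq_ncard]
  exact (Nat.succ_le_succ (Set.ncard_le_ncard hsub)).trans
    (ncard_image_related_ne_add_one_le downEmb b (.inr i))

theorem degree_stackGraph_middle_add_two_le (a b : PElt n) (i : Fin n) :
    (stackGraph a b).degree (.inr (.inl i)) + 2 ≤
      blockCard a (.inr i) + blockCard b (.inl i) := by
  have hsub : (stackGraph a b).neighborSet (.inr (.inl i)) ⊆
      upEmb '' ({y | a.r (.inr i) y} \ {.inr i}) ∪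
        downEmb '' ({y | b.r (.inl i) y} \ {.inl i}) := by
    intro v hv
    obtain ⟨hne, ⟨p | p, q, h, hp, rfl⟩ | ⟨p | p, q, h, hp, rfl⟩⟩ := stackGraph_adj.1 hv <;>
      cases hp
    · exact Or.inl ⟨q, ⟨h, by rintro rfl; exact hne rfl⟩, rfl⟩
    · exact Or.inr ⟨q, ⟨h, by rintro rfl; exact hne rfl⟩, rfl⟩
  have hunion := (Set.ncard_le_ncard hsub).trans (Set.ncard_union_le _ _)
  have hup := ncard_image_related_ne_add_one_le upEmb a (.inr i)
  have hdown := ncard_image_related_ne_add_one_le downEmb b (.inl i)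
  rw [degree_stackGraph_eq_ncard]
  omega

theorem degree_stackGraph_outEmb_lt_two (ha : a ∈ PartialBrauer n) (hb : b ∈ PartialBrauer n)
    (p : PV n) : (stackGraph a b).degree (outEmb p) < 2 := by
  rcases p with i | i
  · exact (degree_stackGraph_upper_add_one_le a b i).trans (ha _)
  · exact (degree_stackGraph_lower_add_one_le a b i).trans (hb _)

theorem degree_stackGraph_middle_lt_two (ha : a ∈ PartialBrauer n) (hb : b ∈ PartialBrauer n)
    {i : Fin n} (hi : blockCard a (.inr i) ≤ 1 ∨ blockCard b (.inl i) ≤ 1) :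
    (stackGraph a b).degree (.inr (.inl i)) < 2 := by
  have := degree_stackGraph_middle_add_two_le a b i
  have := ha (.inr i)
  have := hb (.inl i)
  omega

theorem degree_stackGraph_le_two (ha : a ∈ PartialBrauer n) (hb : b ∈ PartialBrauer n)
    (v : TV n) : (stackGraph a b).degree v ≤ 2 := by
  rcases v with i | i | i
  · exact (degree_stackGraph_outEmb_lt_two ha hb (.inl i)).le
  · have := degree_stackGraph_middle_add_two_le a b i
    have := ha (.inr i)
    have := hb (.inl i)
    omega
  · exact (degree_stackGraph_outEmb_lt_two ha hb (.inr i)).le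

theorem outEmb_injective : Function.Injective (outEmb : PV n → TV n) := by
  rintro (i | i) (j | j) h <;> cases h <;> rfl

theorem outEmb_ne_middle (p : PV n) (i : Fin n) : outEmb p ≠ .inr (.inl i) := by
  rcases p with j | j <;> rintro ⟨⟩

/-! ### Products of partial Brauer partitions -/

theorem pmul_mem_partialBrauer (ha : a ∈ PartialBrauer n) (hb : b ∈ PartialBrauer n) :
    pmul a b ∈ PartialBrauer n := by
  intro x
  rw [blockCard_le_two_iff]
  intro y z hxy hxz
  simpa only [outEmb_injective.eq_iff] using
    eq_of_reachable_of_degree_lt_two (degree_stackGraph_le_two ha hb)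
      (reachable_of_stackSetoid hxy) (reachable_of_stackSetoid hxz)
      (degree_stackGraph_outEmb_lt_two ha hb x) (degree_stackGraph_outEmb_lt_two ha hb y)
      (degree_stackGraph_outEmb_lt_two ha hb z)

theorem blockCard_pmul_le_one_of_degree_eq_zero {p : PV n}
    (hp : (stackGraph a b).degree (outEmb p) = 0) : blockCard (pmul a b) p ≤ 1 := by
  rw [blockCard_le_one_iff]
  intro q hq
  by_contra hne
  exact ((reachable_of_stackSetoid hq).degree_pos_left
    (outEmb_injective.ne (Ne.symm hne))).ne' hp

theorem exists_stackSetoid_outEmb (hfloat : floatCount a b = 0) (i : Fin n) :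
    ∃ p, (stackSetoid a b).r (.inr (.inl i)) (outEmb p) := by
  by_contra! hfloating
  refine (Finite.card_eq_zero_iff.1 hfloat).false
    ⟨Quotient.mk (stackSetoid a b) (.inr (.inl i)), ?_⟩
  rintro (j | j | j) hj
  · exact hfloating (.inl j) ((stackSetoid a b).symm (Quotient.exact hj))
  · trivial
  · exact hfloating (.inr j) ((stackSetoid a b).symm (Quotient.exact hj))

theorem exists_blockCard_pmul_le_one_of_middle (ha : a ∈ PartialBrauer n) (hb : b ∈ PartialBrauer n)
    (hfloat : floatCount a b = 0) {i : Fin n}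
    (hi : blockCard a (.inr i) ≤ 1 ∨ blockCard b (.inl i) ≤ 1) :
    ∃ p, blockCard (pmul a b) p ≤ 1 ∧ 0 < (stackGraph a b).degree (outEmb p) := by
  obtain ⟨p, hp⟩ := exists_stackSetoid_outEmb hfloat i
  refine ⟨p, blockCard_le_one_iff.2 fun q hq => ?_,
    (reachable_of_stackSetoid hp).degree_pos_right (outEmb_ne_middle p i).symm⟩
  rcases eq_of_reachable_of_degree_lt_two (degree_stackGraph_le_two ha hb)
      (reachable_of_stackSetoid hp) (reachable_of_stackSetoid ((stackSetoid a b).trans hp hq))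
      (degree_stackGraph_middle_lt_two ha hb hi) (degree_stackGraph_outEmb_lt_two ha hb p)
      (degree_stackGraph_outEmb_lt_two ha hb q) with hip | hiq | hpq
  · exact (outEmb_ne_middle p i hip.symm).elim
  · exact (outEmb_ne_middle q i hiq.symm).elim
  · exact outEmb_injective hpq.symm

theorem mem_brauer_of_pmul_self_eq (ha : a ∈ PartialBrauer n) (hidem : pmul a a = a)
    (hfloat : floatCount a a = 0) : a ∈ Brauer n := by
  by_contra hbrauer
  obtain ⟨x, hx⟩ := exists_blockCard_le_one ha hbrauer
  obtain ⟨p, hp, hdeg⟩ : ∃ p, blockCard (pmul a a) p ≤ 1 ∧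
      0 < (stackGraph a a).degree (outEmb p) := by
    rcases x with i | i
    · exact exists_blockCard_pmul_le_one_of_middle ha ha hfloat (Or.inr hx)
    · exact exists_blockCard_pmul_le_one_of_middle ha ha hfloat (Or.inl hx)
  rw [hidem] at hp
  rcases p with i | i
  · exact hdeg.not_ge (Nat.le_of_succ_le_succ ((degree_stackGraph_upper_add_one_le a a i).trans hp))
  · exact hdeg.not_ge (Nat.le_of_succ_le_succ ((degree_stackGraph_lower_add_one_le a a i).trans hp))

theorem mem_brauer_of_pmul_mem_brauer (ha : a ∈ PartialBrauer n) (hb : b ∈ PartialBrauer n)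
    (hfloat : floatCount a b = 0) (hab : pmul a b ∈ Brauer n) : a ∈ Brauer n ∧ b ∈ Brauer n := by
  have no_singleton (p : PV n) : ¬ blockCard (pmul a b) p ≤ 1 := by
    rw [hab p]
    decide
  have middle (i : Fin n) : ¬ (blockCard a (.inr i) ≤ 1 ∨ blockCard b (.inl i) ≤ 1) := fun hi =>
    let ⟨p, hp, _⟩ := exists_blockCard_pmul_le_one_of_middle ha hb hfloat hi
    no_singleton p hp
  have outer (p : PV n) : (stackGraph a b).degree (outEmb p) ≠ 0 := fun hp =>
    no_singleton p (blockCard_pmul_le_one_of_degree_eq_zero hp)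
  constructor
  · by_contra hbrauer
    obtain ⟨i | i, hi⟩ := exists_blockCard_le_one ha hbrauer
    · exact outer (.inl i) (Nat.le_zero.1
        (Nat.le_of_succ_le_succ ((degree_stackGraph_upper_add_one_le a b i).trans hi)))
    · exact middle i (Or.inl hi)
  · by_contra hbrauer
    obtain ⟨i | i, hi⟩ := exists_blockCard_le_one hb hbrauer
    · exact middle i (Or.inr hi)
    · exact outer (.inr i) (Nat.le_zero.1
        (Nat.le_of_succ_le_succ ((degree_stackGraph_lower_add_one_le a b i).trans hi)))

end Partition

/-! ### Twisted variants -/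

section Twisted

variable {n : ℕ} {ξ : K} {S T : Set (PElt n)}

theorem twistMul_single_single (ξ : K) (a b : PElt n) (c d : K) :
    twistMul ξ (Finsupp.single a c) (Finsupp.single b d) =
      Finsupp.single (pmul a b) (c * d * ξ ^ floatCount a b) := by
  rw [twistMul, Finsupp.sum_single_index, Finsupp.sum_single_index] <;> simp

theorem single_one_mem_twistedVariant {a : PElt n} (ha : a ∈ S) :
    Finsupp.single a 1 ∈ TwistedVariant ξ S :=
  fun _ hT => hT.1 a ha

theorem twistMul_mem_twistedVariant {f g : PAlg n K} (hf : f ∈ TwistedVariant ξ S)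
    (hg : g ∈ TwistedVariant ξ S) : twistMul ξ f g ∈ TwistedVariant ξ S :=
  fun T hT => hT.2 f (hf T hT) g (hg T hT)

theorem twistedVariant_mono (hST : S ⊆ T) : TwistedVariant ξ S ⊆ TwistedVariant ξ T :=
  Set.sInter_subset_sInter fun _ hT => ⟨fun a ha => hT.1 a (hST ha), hT.2⟩

-- The last clause says that the element is generated by `S ∩ Brauer n`; it survives products
-- because a product satisfies its two premises only if both factors do.
theorem twistedVariant_subset_single (hS : S ⊆ PartialBrauer n) :
    TwistedVariant ξ S ⊆ {f | ∃ (i : ℕ), ∃ a ∈ PartialBrauer n, f = Finsupp.single a (ξ ^ i) ∧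
      (i = 0 → a ∈ Brauer n → f ∈ TwistedVariant ξ (S ∩ Brauer n))} := by
  refine Set.sInter_subset_of_mem ⟨fun a ha => ?_, ?_⟩
  · exact ⟨0, a, hS ha, by rw [pow_zero],
      fun _ hbrauer => single_one_mem_twistedVariant ⟨ha, hbrauer⟩⟩
  · rintro _ ⟨i, a, ha, rfl, hai⟩ _ ⟨j, b, hb, rfl, hbj⟩
    refine ⟨i + j + floatCount a b, pmul a b, pmul_mem_partialBrauer ha hb, ?_, ?_⟩
    · rw [twistMul_single_single, pow_add, pow_add]
    · intro hzero hab
      obtain ⟨⟨hi, hj⟩, hfloat⟩ : (i = 0 ∧ j = 0) ∧ floatCount a b = 0 := by omega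
      obtain ⟨ha', hb'⟩ := mem_brauer_of_pmul_mem_brauer ha hb hfloat hab
      exact twistMul_mem_twistedVariant (hai hi ha') (hbj hj hb')

theorem twistMul_single_self_iff {a : PElt n} {c : K} (hc : c ≠ 0) :
    twistMul ξ (Finsupp.single a c) (Finsupp.single a c) = Finsupp.single a c ↔
      pmul a a = a ∧ c * ξ ^ floatCount a a = 1 := by
  rw [twistMul_single_single, Finsupp.single_eq_single_iff, or_iff_left fun h => hc h.2,
    mul_assoc, mul_eq_left₀ hc]

theorem twisted_motzkin_jones_idempotents_general (hξ : ξ ≠ 0)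
    (hroot : ¬ ∃ m : ℕ, 0 < m ∧ ξ ^ m = 1) (hS : S ⊆ PartialBrauer n) :
    EsetTwist ξ (TwistedVariant ξ S) = EsetTwist ξ (TwistedVariant ξ (S ∩ Brauer n)) := by
  ext f
  refine ⟨fun ⟨hf, hidem⟩ => ⟨?_, hidem⟩, fun ⟨hf, hidem⟩ =>
    ⟨twistedVariant_mono Set.inter_subset_left hf, hidem⟩⟩
  obtain ⟨i, a, ha, rfl, hmem⟩ := twistedVariant_subset_single hS hf
  obtain ⟨ha_idem, hpow⟩ := (twistMul_single_self_iff (pow_ne_zero i hξ)).1 hidem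
  rw [← pow_add] at hpow
  have hexp : i + floatCount a a = 0 :=
    Nat.eq_zero_of_not_pos fun hpos => hroot ⟨_, hpos, hpow⟩
  obtain ⟨hi, hfloat⟩ := Nat.add_eq_zero_iff.1 hexp
  exact hmem hi (mem_brauer_of_pmul_self_eq ha ha_idem hfloat)

end Twisted

/-- Lemma 4.5. Let `k` be a field and `ξ ∈ k∖{0}` not a root of unity.
Then `E(M_n^ξ) = E(J_n^ξ)`. -/
theorem twisted_motzkin_jones_idempotents {K : Type} [Field K] (n : ℕ) (ξ : K)
    (hξ : ξ ≠ 0) (hroot : ¬ ∃ m : ℕ, 0 < m ∧ ξ ^ m = 1) :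
    EsetTwist ξ (TwistedVariant ξ (Motzkin n)) =
      EsetTwist ξ (TwistedVariant ξ (Jones n)) := by
  rw [← motzkin_inter_brauer]
  exact twisted_motzkin_jones_idempotents_general hξ hroot motzkin_subset_partialBrauer
end

section
/- For all k ≥ 1: (i) e_{2k;·,0} = C_k² = e_{2k−1;·,1}, where C_k is the k-th Catalan number; and (ii) e_{2k;·,2} = e_{2k+1;·,1} − e_{2k;·,0} − S^{(1)}_{2k;·,0} − S^{(2)}_{2k;·,0}. -/
open Relation

/-! ### Twisted semigroup algebras -/

variable {K : Type} [Field K]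

/-!
An element of the Jones monoid is a pair of noncrossing half diagrams, its upper and its lower half,
with equally many defects (the ends of its transversals). Half diagrams on `n` points with no
defect, and those with one defect, are counted by the Catalan recursion.

Give the vertices of the interface graph alternating signs. Every arc joins opposite signs, so the
signs of the defects of either half that lie in one component have the same sum. Hence in rank at
most one the product of an element with itself never lowers the rank, and every pair of halves is
idempotent.

A half diagram with two defects arises from one without defects by cutting a return, in exactly
one way. A pair of halves with two defects is idempotent if and only if the two cut returns lie in
the same cycle of the diagram of rank zero. A half diagram with one defect on `n + 1` points is
counted like one without defects on `n + 2` points, of which there are `∑ f, (1 + #returns f)`,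
where `f` runs over those on `n` points. So `e_{n+1;·,1}` is the sum of
`(1 + #returns f) (1 + #returns g)` over `f` and `g`, whose expansion is `e_{n;·,0} + S⁽¹⁾_{n;·,0}`
plus the number of pairs of returns lying in different cycles, `S⁽²⁾_{n;·,0}`, plus that of pairs
lying in the same cycle, `e_{n;·,2}`.
-/

open Finset

/-! ### Half diagrams -/

section HalfDiagrams

variable {α : Type*} [LinearOrder α]

/-- A half diagram: one row of a Jones element, encoded as the involution exchanging the two ends
of every arc and fixing the defects, i.e. the vertices lying in transversals. Arcs do not cross and
no defect lies under an arc. -/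
structure IsHalfDiagram (f : α → α) : Prop where
  involutive : Function.Involutive f
  nested : ∀ w x, w < x → x < f w → f x ≠ x ∧ w < f x ∧ f x < f w

/-- An arc of `f` from `p` to `q` that lies under no other arc. -/
def IsReturn (f : α → α) (p q : α) : Prop :=
  p < q ∧ f p = q ∧ ¬ ∃ k l, k < p ∧ q < l ∧ f k = l

instance [Fintype α] (f : α → α) : Decidable (IsHalfDiagram f) :=
  decidable_of_iff ((∀ i, f (f i) = i) ∧ ∀ w x, w < x → x < f w → f x ≠ x ∧ w < f x ∧ f x < f w)
    ⟨fun h => ⟨h.1, h.2⟩, fun h => ⟨h.1, h.2⟩⟩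

instance [Fintype α] (f : α → α) (p q : α) : Decidable (IsReturn f p q) :=
  inferInstanceAs (Decidable (p < q ∧ f p = q ∧ ¬ ∃ k l, k < p ∧ q < l ∧ f k = l))

variable {f : α → α} {p q : α}

theorem comp_swap_comp_swap (f : α → α) (p q : α) : (f ∘ Equiv.swap p q) ∘ Equiv.swap p q = f := by
  funext i
  simp only [Function.comp_apply, Equiv.swap_apply_self]

theorem comp_swap_of_ne {i : α} (f : α → α) (hp : i ≠ p) (hq : i ≠ q) :
    (f ∘ Equiv.swap p q) i = f i := by
  rw [Function.comp_apply, Equiv.swap_apply_of_ne_of_ne hp hq]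

theorem IsHalfDiagram.comp_swap_of_fixed (hf : IsHalfDiagram f) (hp : f p = p) (hq : f q = q)
    (hpq : p < q) (hb : ∀ x, p < x → x < q → f x ≠ x) : IsHalfDiagram (f ∘ Equiv.swap p q) := by
  have hi := hf.involutive
  have hinv : Function.Involutive (f ∘ Equiv.swap p q) := fun i => by
    have := hi i
    simp only [Function.comp_apply, Equiv.swap_apply_def]
    grind
  refine ⟨hinv, fun w x hwx hxw => ?_⟩
  have hwq : w ≠ q := by
    rintro rfl
    simp only [Function.comp_apply, Equiv.swap_apply_right, hp] at hxw
    exact absurd hxw (hpq.trans hwx).not_gt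
  obtain rfl | hwp := eq_or_ne w p
  · have hw : (f ∘ Equiv.swap w q) w = q := by simp [hq]
    rw [hw] at hxw ⊢
    rw [comp_swap_of_ne f hwx.ne' hxw.ne]
    have hfx := hb x hwx hxw
    have hfxw : f x ≠ w := fun h => hwx.ne' (by rw [← hi x, h, hp])
    have hfxq : f x ≠ q := fun h => hxw.ne (by rw [← hi x, h, hq])
    refine ⟨hfx, lt_of_not_ge fun hle => ?_, lt_of_not_ge fun hle => ?_⟩
    · exact (hf.nested (f x) w (hle.lt_of_ne hfxw) (by rwa [hi])).1 hp
    · exact (hf.nested x q hxw (hle.lt_of_ne' hfxq)).1 hq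
  · rw [comp_swap_of_ne f hwp hwq] at hxw ⊢
    have := hf.nested w x hwx hxw
    rwa [comp_swap_of_ne f (by rintro rfl; exact this.1 hp) (by rintro rfl; exact this.1 hq)]

theorem IsHalfDiagram.isReturn_comp_swap (hf : IsHalfDiagram f) (hp : f p = p) (hq : f q = q)
    (hpq : p < q) : IsReturn (f ∘ Equiv.swap p q) p q := by
  refine ⟨hpq, by simp [hq], ?_⟩
  rintro ⟨k, l, hk, hl, hkl⟩
  rw [comp_swap_of_ne f hk.ne (hk.trans hpq).ne] at hkl
  exact (hf.nested k p hk (by rw [hkl]; exact hpq.trans hl)).1 hp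

theorem IsReturn.apply_right (h : IsReturn f p q) (hf : Function.Involutive f) : f q = p := by
  rw [← h.2.1, hf]

theorem IsReturn.comp_swap_left (h : IsReturn f p q) (hf : Function.Involutive f) :
    (f ∘ Equiv.swap p q) p = p := by
  rw [Function.comp_apply, Equiv.swap_apply_left, h.apply_right hf]

theorem IsReturn.comp_swap_right (h : IsReturn f p q) : (f ∘ Equiv.swap p q) q = q := by
  rw [Function.comp_apply, Equiv.swap_apply_right, h.2.1]

theorem IsHalfDiagram.comp_swap_of_isReturn (hf : IsHalfDiagram f) (h : IsReturn f p q) :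
    IsHalfDiagram (f ∘ Equiv.swap p q) := by
  have hp := h.comp_swap_left hf.involutive
  have hq := h.comp_swap_right
  have hinv : Function.Involutive (f ∘ Equiv.swap p q) := fun i => by
    have := hf.involutive i
    simp only [Function.comp_apply, Equiv.swap_apply_def] at hp hq ⊢
    grind
  refine ⟨hinv, fun w x hwx hxw => ?_⟩
  have hwp : w ≠ p := by rintro rfl; rw [hp] at hxw; exact hwx.not_gt hxw
  have hwq : w ≠ q := by rintro rfl; rw [hq] at hxw; exact hwx.not_gt hxw
  rw [comp_swap_of_ne f hwp hwq] at hxw ⊢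
  have hx := hf.nested w x hwx hxw
  have hfq := h.apply_right hf.involutive
  have hnot : ∀ y, w < y → y < f w → w < f y → f y < f w → y ≠ p ∧ y ≠ q := fun y h₁ h₂ h₃ h₄ =>
    ⟨by rintro rfl; exact h.2.2 ⟨w, f w, h₁, h.2.1 ▸ h₄, rfl⟩,
     by rintro rfl; exact h.2.2 ⟨w, f w, hfq ▸ h₃, h₂, rfl⟩⟩
  have hxpq := hnot x hwx hxw hx.2.1 hx.2.2
  rwa [comp_swap_of_ne f hxpq.1 hxpq.2]

theorem IsHalfDiagram.apply_le_iff_of_isReturn (hf : IsHalfDiagram f) (h : IsReturn f p q) {x : α} :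
    f x ≤ q ↔ x ≤ q := by
  have key : ∀ y, y ≤ q → f y ≤ q := fun y hy => by
    by_contra! hlt
    obtain hyp | rfl | hpy := lt_trichotomy y p
    · exact h.2.2 ⟨y, f y, hyp, hlt, rfl⟩
    · exact hlt.ne h.2.1.symm
    · obtain rfl | hyq := eq_or_lt_of_le hy
      · exact (h.apply_right hf.involutive ▸ hlt).not_gt h.1
      · exact hlt.not_gt (h.2.1 ▸ (hf.nested p y hpy (h.2.1.symm ▸ hyq)).2.2)
  exact ⟨fun hx => hf.involutive x ▸ key _ hx, key x⟩

theorem IsHalfDiagram.isReturn_apply_iff (hf : IsHalfDiagram f) (hq : f q ≠ q) :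
    IsReturn f (f q) q ↔ ∀ x ≤ q, f x ≤ q := by
  refine ⟨fun h x => (hf.apply_le_iff_of_isReturn h).2, fun h => ?_⟩
  refine ⟨(h q le_rfl).lt_of_ne hq, hf.involutive q, ?_⟩
  rintro ⟨k, l, hk, hl, rfl⟩
  exact (h k (hk.le.trans (h q le_rfl))).not_gt hl

theorem comp_swap_apply_eq_self_iff_of_arc {i : α} (hp : f p = q) (hq : f q = p) :
    (f ∘ Equiv.swap p q) i = i ↔ f i = i ∨ i = p ∨ i = q := by
  simp only [Function.comp_apply, Equiv.swap_apply_def]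
  grind

theorem comp_swap_apply_eq_self_iff_of_fixed {i : α} (hp : f p = p) (hq : f q = q) (hpq : p ≠ q) :
    (f ∘ Equiv.swap p q) i = i ↔ f i = i ∧ i ≠ p ∧ i ≠ q := by
  simp only [Function.comp_apply, Equiv.swap_apply_def]
  grind

end HalfDiagrams

section Ranks

variable {α : Type*} [LinearOrder α] {s : Finset α} {i j : α}

/-- The number of elements of `s` below `i`, i.e. the position (from `0`) of `i` in `s`. -/
def rankIn (s : Finset α) (i : α) : ℕ := #{j ∈ s | j < i}

theorem rankIn_lt_rankIn (hi : i ∈ s) (hij : i < j) : rankIn s i < rankIn s j := by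
  refine card_lt_card ((Finset.ssubset_iff_of_subset fun k hk => ?_).2 ⟨i, ?_, ?_⟩)
  · exact mem_filter.2 ⟨(mem_filter.1 hk).1, (mem_filter.1 hk).2.trans hij⟩
  · exact mem_filter.2 ⟨hi, hij⟩
  · simp

theorem strictMonoOn_rankIn (s : Finset α) : StrictMonoOn (rankIn s) s :=
  fun _ hi _ _ hij => rankIn_lt_rankIn hi hij

theorem image_rankIn (s : Finset α) : s.image (rankIn s) = range #s := by
  refine eq_of_subset_of_card_le (fun k hk => ?_) ?_
  · obtain ⟨i, hi, rfl⟩ := mem_image.1 hk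
    exact mem_range.2 (card_lt_card (filter_ssubset.2 ⟨i, hi, lt_irrefl i⟩))
  · rw [card_range, card_image_of_injOn (strictMonoOn_rankIn s).injOn]

theorem card_filter_gt (hi : i ∈ s) : #{j ∈ s | i < j} = #s - 1 - rankIn s i := by
  have h : {j ∈ s | ¬ j < i} = insert i {j ∈ s | i < j} := by
    ext j
    simp only [mem_filter, mem_insert, not_lt, le_iff_eq_or_lt]
    grind
  have := card_filter_add_card_filter_not (s := s) (· < i)
  rw [h, card_insert_of_notMem (by simp)] at this
  rw [rankIn]
  omega

theorem sum_rankIn {M : Type*} [AddCommMonoid M] (s : Finset α) (F : ℕ → M) :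
    ∑ i ∈ s, F (rankIn s i) = ∑ k ∈ range #s, F k := by
  rw [← image_rankIn, sum_image (strictMonoOn_rankIn s).injOn]

theorem rankIn_image {β : Type*} [LinearOrder β] {φ : α → β} (hφ : StrictMonoOn φ s) (hi : i ∈ s) :
    rankIn (s.image φ) (φ i) = rankIn s i := by
  rw [rankIn, rankIn, filter_image, card_image_of_injOn]
  · exact congrArg card (filter_congr fun j hj => hφ.lt_iff_lt hj hi)
  · exact hφ.injOn.mono fun _ hj => (mem_filter.1 hj).1

end Ranks

/-! ### Counting half diagrams -/

section Counting

/-- The number of noncrossing perfect matchings of `m` points: `C_{m/2}` for even `m`, and `0` for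
odd `m`. -/
def aeratedCatalan (m : ℕ) : ℕ := if Even m then catalan (m / 2) else 0

theorem aeratedCatalan_two_mul (m : ℕ) : aeratedCatalan (2 * m) = catalan m := by
  simp [aeratedCatalan]

theorem aeratedCatalan_of_not_even {m : ℕ} (h : ¬ Even m) : aeratedCatalan m = 0 := if_neg h

theorem sum_aeratedCatalan_mul (L : ℕ) :
    ∑ i ∈ range (L + 1), aeratedCatalan i * aeratedCatalan (L - i) = aeratedCatalan (L + 2) := by
  rw [← Nat.succ_eq_add_one,
    ← Nat.sum_antidiagonal_eq_sum_range_succ fun i j => aeratedCatalan i * aeratedCatalan j]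
  obtain ⟨m, rfl | rfl⟩ := Nat.even_or_odd' L
  · rw [show 2 * m + 2 = 2 * (m + 1) by ring, aeratedCatalan_two_mul, catalan_succ']
    symm
    refine sum_of_injOn (fun ij => (2 * ij.1, 2 * ij.2)) ?_ ?_ ?_ ?_
    · rintro ⟨i, j⟩ - ⟨i', j'⟩ - h
      simpa using h
    · rintro ⟨i, j⟩ h
      simp only [mem_coe, HasAntidiagonal.mem_antidiagonal] at h ⊢
      omega
    · rintro ⟨i, j⟩ h hij
      have hi : ¬ Even i := fun ⟨a, ha⟩ => hij ⟨(a, m - a), by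
        simp only [mem_coe, HasAntidiagonal.mem_antidiagonal, Prod.mk.injEq] at h ⊢
        omega⟩
      rw [aeratedCatalan_of_not_even hi, zero_mul]
    · simp [aeratedCatalan_two_mul]
  · rw [aeratedCatalan_of_not_even (m := 2 * m + 1 + 2) (by grind)]
    refine sum_eq_zero fun ij hij => ?_
    rw [HasAntidiagonal.mem_antidiagonal] at hij
    by_cases hi : Even ij.1
    · rw [aeratedCatalan_of_not_even (m := ij.2) (by grind), mul_zero]
    · rw [aeratedCatalan_of_not_even hi, zero_mul]

variable {α : Type*} [LinearOrder α] {s t : Finset α}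

theorem sum_aeratedCatalan_rankIn (s : Finset α) :
    ∑ j ∈ s, aeratedCatalan #{i ∈ s | i < j} * aeratedCatalan #{i ∈ s | j < i} =
      aeratedCatalan (#s + 1) := by
  rw [sum_congr rfl fun j hj => by rw [card_filter_gt hj, ← rankIn],
    sum_rankIn s fun k => aeratedCatalan k * aeratedCatalan (#s - 1 - k)]
  cases #s with
  | zero => rfl
  | succ L => exact sum_aeratedCatalan_mul L

theorem IsHalfDiagram.piecewise_id {f : α → α} (hf : IsHalfDiagram f) (hs : ∀ i ∈ s, f i ∈ s)
    (hconv : ∀ w ∈ s, ∀ x, w < x → x < f w → x ∈ s) : IsHalfDiagram (s.piecewise f id) := by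
  refine ⟨fun i => ?_, fun w x hwx hxw => ?_⟩
  · by_cases hi : i ∈ s
    · rw [piecewise_eq_of_mem _ _ _ hi, piecewise_eq_of_mem _ _ _ (hs i hi), hf.involutive]
    · rw [piecewise_eq_of_notMem _ _ _ hi, id, piecewise_eq_of_notMem _ _ _ hi, id]
  · by_cases hw : w ∈ s
    · rw [piecewise_eq_of_mem _ _ _ hw] at hxw ⊢
      rw [piecewise_eq_of_mem _ _ _ (hconv w hw x hwx hxw)]
      exact hf.nested w x hwx hxw
    · rw [piecewise_eq_of_notMem _ _ _ hw] at hxw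
      exact absurd hxw hwx.not_gt

variable [Fintype α]

/-- The noncrossing perfect matchings of `s`, as half diagrams whose defects are the points
outside `s`. -/
def matchings (s : Finset α) : Finset (α → α) := {f | IsHalfDiagram f ∧ ∀ i, f i ≠ i ↔ i ∈ s}

theorem mem_matchings {f : α → α} :
    f ∈ matchings s ↔ IsHalfDiagram f ∧ ∀ i, f i ≠ i ↔ i ∈ s := by
  simp [matchings]

theorem apply_eq_self_of_mem_matchings {f : α → α} {i : α} (hf : f ∈ matchings s) (hi : i ∉ s) :
    f i = i :=
  not_not.1 fun h => hi (((mem_matchings.1 hf).2 i).1 h)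

theorem apply_mem_of_mem_matchings {f : α → α} {i : α} (hf : f ∈ matchings s) (hi : i ∈ s) :
    f i ∈ s := by
  obtain ⟨hf, hs⟩ := mem_matchings.1 hf
  rw [← hs, hf.involutive]
  exact ((hs i).2 hi).symm

theorem piecewise_id_mem_matchings {f : α → α} (hf : IsHalfDiagram f) (hne : ∀ i ∈ s, f i ≠ i)
    (hs : ∀ i ∈ s, f i ∈ s) (hconv : ∀ w ∈ s, ∀ x, w < x → x < f w → x ∈ s) :
    s.piecewise f id ∈ matchings s := by
  refine mem_matchings.2 ⟨hf.piecewise_id hs hconv, fun i => ?_⟩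
  by_cases hi : i ∈ s
  · simpa [hi] using hne i hi
  · simp [hi]

theorem comp_mem_matchings {f g : α → α} (hst : ∀ x ∈ s, ∀ y ∈ t, x < y) (hf : f ∈ matchings s)
    (hg : g ∈ matchings t) : f ∘ g ∈ matchings (s ∪ t) := by
  have hfs := fun i => apply_mem_of_mem_matchings (i := i) hf
  have hgt := fun i => apply_mem_of_mem_matchings (i := i) hg
  have hf' := fun i => apply_eq_self_of_mem_matchings (i := i) hf
  have hg' := fun i => apply_eq_self_of_mem_matchings (i := i) hg
  have hs : ∀ i, i ∉ t → (f ∘ g) i = f i := fun i hi => congrArg f (hg' i hi)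
  have ht : ∀ i, i ∈ t → (f ∘ g) i = g i := fun i hi =>
    hf' _ fun h => (hst _ h _ (hgt i hi)).false
  obtain ⟨hf, hfne⟩ := mem_matchings.1 hf
  obtain ⟨hg, hgne⟩ := mem_matchings.1 hg
  have hdisj : ∀ i ∈ s, i ∉ t := fun i h h' => (hst i h i h').false
  refine mem_matchings.2 ⟨⟨fun i => ?_, fun w x hwx hxw => ?_⟩, fun i => ?_⟩
  · have := hf.involutive i
    have := hg.involutive i
    by_cases hit : i ∈ t
    · rw [ht i hit, ht _ (hgt i hit), hg.involutive]
    · grind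
  · by_cases hwt : w ∈ t
    · rw [ht w hwt] at hxw ⊢
      have hx := hg.nested w x hwx hxw
      rwa [ht x ((hgne x).1 hx.1)]
    · rw [hs w hwt] at hxw ⊢
      have hws : w ∈ s := by
        by_contra hws
        exact hwx.not_gt (hf' w hws ▸ hxw)
      rw [hs x fun hxt => (hst _ (hfs w hws) x hxt).not_gt hxw]
      exact hf.nested w x hwx hxw
  · grind

theorem piecewise_id_mem_product_matchings {f : α → α} (hst : ∀ x ∈ s, ∀ y ∈ t, x < y)
    (hfm : f ∈ matchings (s ∪ t)) (hfs : ∀ i ∈ s, f i ∈ s) :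
    (s.piecewise f id, t.piecewise f id) ∈ matchings s ×ˢ matchings t := by
  obtain ⟨hf, hne⟩ := mem_matchings.1 hfm
  have hmem : ∀ w x, w < x → x < f w → x ∈ s ∪ t := fun w x hwx hxw =>
    (hne x).1 (hf.nested w x hwx hxw).1
  have hft : ∀ i ∈ t, f i ∈ t := fun i hi =>
    (mem_union.1 (apply_mem_of_mem_matchings hfm (mem_union_right s hi))).resolve_left fun h =>
      (hst _ (hf.involutive i ▸ hfs _ h) i hi).false
  refine mem_product.2 ⟨piecewise_id_mem_matchings hf ?_ hfs ?_,
    piecewise_id_mem_matchings hf ?_ hft ?_⟩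
  · exact fun i hi => (hne i).2 (mem_union_left t hi)
  · exact fun w hw x hwx hxw => (mem_union.1 (hmem w x hwx hxw)).resolve_right fun hx =>
      (hst _ (hfs w hw) x hx).not_gt hxw
  · exact fun i hi => (hne i).2 (mem_union_right s hi)
  · exact fun w hw x hwx hxw => (mem_union.1 (hmem w x hwx hxw)).resolve_left fun hx =>
      (hst x hx w hw).not_gt hwx

theorem card_filter_matchings_union (hst : ∀ x ∈ s, ∀ y ∈ t, x < y) :
    #{f ∈ matchings (s ∪ t) | ∀ i ∈ s, f i ∈ s} = #(matchings s) * #(matchings t) := by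
  have hdisj : ∀ i ∈ s, i ∉ t := fun i h h' => (hst i h i h').false
  rw [← card_product]
  refine card_nbij' (fun f => (s.piecewise f id, t.piecewise f id)) (fun p => p.1 ∘ p.2)
    ?_ ?_ ?_ ?_
  · intro f hf
    exact piecewise_id_mem_product_matchings hst (mem_filter.1 hf).1 (mem_filter.1 hf).2
  · rintro ⟨f, g⟩ hp
    obtain ⟨hf, hg⟩ := mem_product.1 hp
    refine mem_filter.2 ⟨comp_mem_matchings hst hf hg, fun i hi => ?_⟩
    dsimp only at hf hg ⊢
    rw [Function.comp_apply, apply_eq_self_of_mem_matchings hg (hdisj i hi)]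
    exact apply_mem_of_mem_matchings hf hi
  · intro f hf
    have hfix := fun i => apply_eq_self_of_mem_matchings (i := i) (mem_filter.1 hf).1
    obtain ⟨hfm, hfs⟩ := mem_filter.1 hf
    have hmem := fun i => apply_mem_of_mem_matchings (i := i) hfm
    have hinv := (mem_matchings.1 hfm).1.involutive
    funext i
    have := hinv i
    simp only [Function.comp_apply, piecewise, id]
    grind
  · rintro ⟨f, g⟩ hp
    obtain ⟨hf, hg⟩ := mem_product.1 hp
    have hf' := fun i => apply_eq_self_of_mem_matchings (i := i) hf
    have hg' := fun i => apply_eq_self_of_mem_matchings (i := i) hg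
    have hgt := fun i => apply_mem_of_mem_matchings (i := i) hg
    ext i <;> simp only [Function.comp_apply, piecewise, id] <;> grind

theorem comp_swap_mem_matchings_of_arc {f : α → α} {m q : α} (hm : ∀ x ∈ s, m < x) (hq : q ∈ s)
    (hf : f ∈ matchings (insert m s)) (hfm : f m = q) :
    f ∘ Equiv.swap m q ∈ matchings ({i ∈ s | i < q} ∪ {i ∈ s | q < i}) ∧
      ∀ i ∈ {i ∈ s | i < q}, (f ∘ Equiv.swap m q) i ∈ {i ∈ s | i < q} := by
  have hmem := fun i => apply_mem_of_mem_matchings (i := i) hf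
  have hfix := fun i => apply_eq_self_of_mem_matchings (i := i) hf
  obtain ⟨hf, hne⟩ := mem_matchings.1 hf
  have hret : IsReturn f m q := by
    refine ⟨hm q hq, hfm, ?_⟩
    rintro ⟨k, l, hk, hl, hkl⟩
    have hkm : k ∉ insert m s := fun h => (mem_insert.1 h).elim hk.ne fun h => (hm k h).not_gt hk
    exact (hk.trans ((hm q hq).trans hl)).ne (hfix k hkm ▸ hkl)
  refine ⟨mem_matchings.2 ⟨hf.comp_swap_of_isReturn hret, fun i => ?_⟩, fun i hi => ?_⟩
  · rw [ne_eq, comp_swap_apply_eq_self_iff_of_arc hfm (hret.apply_right hf.involutive)]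
    grind
  · obtain ⟨his, hiq⟩ := mem_filter.1 hi
    rw [comp_swap_of_ne f (hm i his).ne' hiq.ne, mem_filter]
    obtain ⟨-, hlt, hgt⟩ := hf.nested m i (hm i his) (hfm ▸ hiq)
    exact ⟨(mem_insert.1 (hmem i (mem_insert_of_mem his))).resolve_left hlt.ne', hfm ▸ hgt⟩

theorem comp_swap_mem_matchings_of_fixed {f : α → α} {m q : α} (hm : ∀ x ∈ s, m < x)
    (hq : q ∈ s) (hs : (insert m s : Set α).OrdConnected)
    (hf : f ∈ matchings ({i ∈ s | i < q} ∪ {i ∈ s | q < i})) :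
    f ∘ Equiv.swap m q ∈ matchings (insert m s) ∧ (f ∘ Equiv.swap m q) m = q := by
  have hms : m ∉ s := fun h => (hm m h).false
  have hfm := apply_eq_self_of_mem_matchings (i := m) hf (by grind)
  have hfq := apply_eq_self_of_mem_matchings (i := q) hf (by grind)
  obtain ⟨hf, hne⟩ := mem_matchings.1 hf
  have hbetween : ∀ x, m < x → x < q → f x ≠ x := fun x hmx hxq => by
    have hx : x ∈ (insert m s : Set α) :=
      hs.out (Set.mem_insert m _) (Set.mem_insert_of_mem m hq) ⟨hmx.le, hxq.le⟩
    rw [hne]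
    exact mem_union_left _ (mem_filter.2 ⟨hx.resolve_left hmx.ne', hxq⟩)
  refine ⟨mem_matchings.2 ⟨hf.comp_swap_of_fixed hfm hfq (hm q hq) hbetween, fun i => ?_⟩, ?_⟩
  · rw [ne_eq, comp_swap_apply_eq_self_iff_of_fixed hfm hfq (hm q hq).ne]
    grind
  · rw [Function.comp_apply, Equiv.swap_apply_left, hfq]

theorem card_filter_matchings_insert {m q : α} (hm : ∀ x ∈ s, m < x) (hq : q ∈ s)
    (hs : (insert m s : Set α).OrdConnected) :
    #{f ∈ matchings (insert m s) | f m = q} =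
      #(matchings {i ∈ s | i < q}) * #(matchings {i ∈ s | q < i}) := by
  rw [← card_filter_matchings_union fun x hx y hy =>
    (mem_filter.1 hx).2.trans (mem_filter.1 hy).2]
  refine card_nbij' (· ∘ Equiv.swap m q) (· ∘ Equiv.swap m q) (fun f hf => ?_) (fun f hf => ?_)
    (fun f _ => comp_swap_comp_swap f m q) (fun f _ => comp_swap_comp_swap f m q)
  · exact mem_filter.2
      (comp_swap_mem_matchings_of_arc hm hq (mem_filter.1 hf).1 (mem_filter.1 hf).2)
  · exact mem_filter.2 (comp_swap_mem_matchings_of_fixed hm hq hs (mem_filter.1 hf).1)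

theorem card_matchings (hs : (s : Set α).OrdConnected) : #(matchings s) = aeratedCatalan #s := by
  induction h : #s using Nat.strong_induction_on generalizing s with
  | _ N ih =>
  obtain rfl | hne := s.eq_empty_or_nonempty
  · have : matchings (∅ : Finset α) = {id} := by
      ext f
      simp only [mem_matchings, notMem_empty, iff_false, not_not, mem_singleton]
      exact ⟨fun h => funext h.2, fun h => h ▸
        ⟨⟨fun _ => rfl, fun w x hwx hxw => absurd hxw hwx.not_gt⟩, fun _ => rfl⟩⟩
    rw [this, ← h]
    simp [aeratedCatalan]
  obtain ⟨m, t, hm, rfl⟩ : ∃ m t, (∀ x ∈ t, m < x) ∧ s = insert m t :=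
    ⟨s.min' hne, s.erase (s.min' hne), fun x hx => s.min'_lt_of_mem_erase_min' hne hx,
      (insert_erase (s.min'_mem hne)).symm⟩
  have hmt : m ∉ t := fun h => (hm m h).false
  rw [card_insert_of_notMem hmt] at h
  rw [coe_insert] at hs
  have hfib : ∀ f ∈ matchings (insert m t), f m ∈ t := fun f hf =>
    (mem_insert.1 (apply_mem_of_mem_matchings hf (mem_insert_self m t))).resolve_left
      (((mem_matchings.1 hf).2 m).2 (mem_insert_self m t))
  have hsub : ∀ (P : α → Prop) [DecidablePred P], (∀ x y z, P x → P z → x ≤ y → y ≤ z → P y) →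
      #(matchings {i ∈ t | P i}) = aeratedCatalan #{i ∈ t | P i} := by
    intro P _ hP
    refine ih _ ((card_filter_le t P).trans_lt (by lia)) ⟨fun x hx z hz y hy => ?_⟩ rfl
    obtain ⟨hx, hPx⟩ := mem_filter.1 hx
    obtain ⟨hz, hPz⟩ := mem_filter.1 hz
    have hyt := hs.out (Set.mem_insert_of_mem m hx) (Set.mem_insert_of_mem m hz) hy
    have hyt := hyt.resolve_left ((hm x hx).trans_le hy.1).ne'
    exact mem_filter.2 ⟨hyt, hP x y z hPx hPz hy.1 hy.2⟩
  rw [card_eq_sum_card_fiberwise hfib, ← h, ← sum_aeratedCatalan_rankIn]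
  refine sum_congr rfl fun q hq => ?_
  rw [card_filter_matchings_insert hm hq hs, hsub (· < q) fun _ _ _ _ hz _ h => h.trans_lt hz,
    hsub (q < ·) fun _ _ _ hx _ h _ => hx.trans_le h]

/-- The defects of a half diagram, i.e. its vertices lying in transversals. -/
def defects (f : α → α) : Finset α := {i | f i = i}

@[simp]
theorem mem_defects {f : α → α} {i : α} : i ∈ defects f ↔ f i = i := by
  simp [defects]

/-- The half diagrams on `α` with `t` defects. -/
def halfDiagrams (α : Type*) [LinearOrder α] [Fintype α] (t : ℕ) : Finset (α → α) :=
  {f | IsHalfDiagram f ∧ #(defects f) = t}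

/-- The returns `(p, q)` of a half diagram, with `p < q`. -/
def returns (f : α → α) : Finset (α × α) := {r | IsReturn f r.1 r.2}

theorem mem_halfDiagrams {f : α → α} {t : ℕ} :
    f ∈ halfDiagrams α t ↔ IsHalfDiagram f ∧ #(defects f) = t := by
  simp [halfDiagrams]

@[simp]
theorem mem_returns {f : α → α} {r : α × α} : r ∈ returns f ↔ IsReturn f r.1 r.2 := by
  simp [returns]

theorem halfDiagrams_zero : halfDiagrams α 0 = matchings univ := by
  ext f
  simp [mem_halfDiagrams, mem_matchings, Finset.ext_iff]

theorem card_halfDiagrams_zero : #(halfDiagrams α 0) = aeratedCatalan (Fintype.card α) := by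
  rw [halfDiagrams_zero, card_matchings (by simpa using Set.ordConnected_univ), card_univ]

theorem card_matchings_filter_ne (p : α) :
    #(matchings {i | i ≠ p}) = #(matchings {i | i < p}) * #(matchings {i | p < i}) := by
  rw [← card_filter_matchings_union fun x hx y hy =>
    (mem_filter.1 hx).2.trans (mem_filter.1 hy).2, ← filter_or]
  simp only [← ne_iff_lt_or_gt]
  refine congrArg card (filter_true_of_mem fun f hf i hi => ?_).symm
  have hfp : f p = p := apply_eq_self_of_mem_matchings hf (by simp)
  replace hf := (mem_matchings.1 hf).1
  rw [mem_filter_univ] at hi ⊢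
  by_contra! h
  obtain rfl | h := h.eq_or_lt
  · exact hi.ne ((hf.involutive i).symm.trans hfp)
  · exact (hf.nested i p hi h).1 hfp

theorem card_halfDiagrams_one :
    #(halfDiagrams α 1) = aeratedCatalan (Fintype.card α + 1) := by
  have hunion : halfDiagrams α 1 = univ.biUnion fun p => matchings {i | i ≠ p} := by
    ext f
    simp only [mem_halfDiagrams, mem_biUnion, mem_univ, true_and, mem_matchings, card_eq_one,
      mem_filter, ← exists_and_left, Finset.ext_iff, mem_defects, mem_singleton, not_iff_not, ne_eq]
  rw [hunion, card_biUnion, ← card_univ, ← sum_aeratedCatalan_rankIn univ]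
  · refine sum_congr rfl fun p _ => ?_
    rw [card_matchings_filter_ne, card_matchings, card_matchings]
    · simpa using! Set.ordConnected_Ioi
    · simpa using! Set.ordConnected_Iio
  · refine fun p _ q _ hpq => disjoint_left.2 fun f hfp hfq => ?_
    have hf := apply_eq_self_of_mem_matchings (i := p) hfp (by simp)
    exact ((mem_matchings.1 hfq).2 p).2 (by simpa) hf

theorem card_returns {f : α → α} (hf : f ∈ halfDiagrams α 0) :
    #(returns f) = #{q : α | ∀ x ≤ q, f x ≤ q} := by
  rw [halfDiagrams_zero] at hf
  obtain ⟨hf, hne⟩ := mem_matchings.1 hf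
  refine card_nbij' Prod.snd (fun q => (f q, q)) ?_ ?_ ?_ fun _ _ => rfl
  · rintro ⟨p, q⟩ h
    rw [mem_coe, mem_returns] at h
    simpa using fun x => (hf.apply_le_iff_of_isReturn h).2
  · intro q hq
    rw [mem_coe, mem_filter_univ] at hq
    exact mem_returns.2 ((hf.isReturn_apply_iff ((hne q).2 (mem_univ q))).2 hq)
  · rintro ⟨p, q⟩ h
    rw [mem_coe, mem_returns] at h
    exact Prod.ext (h.apply_right hf.involutive) rfl

theorem sum_card_returns :
    ∑ f ∈ halfDiagrams α 0, (1 + #(returns f)) = aeratedCatalan (Fintype.card α + 2) := by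
  have hstable : ∀ q : α, #{f ∈ halfDiagrams α 0 | ∀ x ≤ q, f x ≤ q} =
      aeratedCatalan (rankIn univ q + 1) *
        aeratedCatalan (Fintype.card α - (rankIn univ q + 1)) := fun q => by
    have hle : #{i : α | i ≤ q} = rankIn univ q + 1 := by
      rw [rankIn, ← card_insert_of_notMem (by simp : q ∉ _)]
      congr 1
      ext i
      simp [le_iff_eq_or_lt]
    have := card_filter_matchings_union (s := {i : α | i ≤ q}) (t := {i | q < i}) (by grind)
    rw [← filter_or, filter_true_of_mem fun i _ => le_or_gt i q, ← halfDiagrams_zero] at this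
    simp only [mem_filter_univ] at this
    rw [this, card_matchings (by simpa using! Set.ordConnected_Iic),
      card_matchings (by simpa using! Set.ordConnected_Ioi), hle, card_filter_gt (mem_univ q),
      card_univ, Nat.sub_sub, add_comm 1]
  rw [sum_add_distrib, sum_const, card_halfDiagrams_zero, sum_congr rfl fun f hf => card_returns hf]
  simp only [card_filter]
  rw [sum_comm]
  simp only [← card_filter, hstable]
  rw [sum_rankIn univ fun k => aeratedCatalan (k + 1) * aeratedCatalan (Fintype.card α - (k + 1)),
    ← sum_aeratedCatalan_mul, sum_range_succ', card_univ, add_comm]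
  simp [aeratedCatalan]

end Counting

/-! ### Jones elements as pairs of half diagrams -/

section Labels

variable {α : Type*} [LinearOrder α] [Fintype α] {f g : α → α} {i i' j j' : α}

/-- A name for the block of `i` in a row with half diagram `f`: the position of a defect among all
defects, and the smaller end of an arc. -/
def halfLabel (f : α → α) (i : α) : ℕ ⊕ α :=
  if f i = i then .inl (rankIn (defects f) i) else .inr (min i (f i))

theorem halfLabel_eq_iff (hf : Function.Involutive f) :
    halfLabel f i = halfLabel f j ↔ i = j ∨ f i = j := by
  have hi := hf i
  have hj := hf j
  by_cases hfi : f i = i <;> by_cases hfj : f j = j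
  · simp only [halfLabel, hfi, hfj, if_true, Sum.inl.injEq, or_self]
    exact (strictMonoOn_rankIn _).injOn.eq_iff (mem_defects.2 hfi) (mem_defects.2 hfj)
  · simp only [halfLabel, hfi, hfj, if_true, if_false, reduceCtorEq, or_self, false_iff]
    grind
  · simp only [halfLabel, hfi, hfj, if_true, if_false, reduceCtorEq, false_iff]
    grind
  · simp only [halfLabel, hfi, hfj, if_false, Sum.inr.injEq]
    grind

/-- `i` and `j` are the two ends of a transversal when `f` is drawn above `g`: defects are joined
from left to right. -/
def IsTransversal (f g : α → α) (i j : α) : Prop :=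
  f i = i ∧ g j = j ∧ rankIn (defects f) i = rankIn (defects g) j

theorem IsTransversal.symm (h : IsTransversal f g i j) : IsTransversal g f j i :=
  ⟨h.2.1, h.1, h.2.2.symm⟩

theorem isTransversal_comm : IsTransversal f g i j ↔ IsTransversal g f j i :=
  ⟨IsTransversal.symm, IsTransversal.symm⟩

theorem IsTransversal.right_unique (h : IsTransversal f g i j) (h' : IsTransversal f g i j') :
    j = j' :=
  (strictMonoOn_rankIn _).injOn (mem_defects.2 h.2.1) (mem_defects.2 h'.2.1)
    (h.2.2.symm.trans h'.2.2)

theorem IsTransversal.left_unique (h : IsTransversal f g i j) (h' : IsTransversal f g i' j) :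
    i = i' :=
  h.symm.right_unique h'.symm

theorem IsTransversal.lt (h : IsTransversal f g i j) (h' : IsTransversal f g i' j') (hi : i < i') :
    j < j' := by
  rw [← (strictMonoOn_rankIn _).lt_iff_lt (mem_defects.2 h.2.1) (mem_defects.2 h'.2.1), ← h.2.2,
    ← h'.2.2]
  exact rankIn_lt_rankIn (mem_defects.2 h.1) hi

theorem exists_isTransversal (hfg : #(defects f) = #(defects g)) (hi : f i = i) :
    ∃ j, IsTransversal f g i j := by
  have hmem : rankIn (defects f) i ∈ (defects g).image (rankIn (defects g)) := by
    rw [image_rankIn, ← hfg, ← image_rankIn]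
    exact mem_image_of_mem _ (mem_defects.2 hi)
  obtain ⟨j, hj, hrank⟩ := mem_image.1 hmem
  exact ⟨j, hi, mem_defects.1 hj, hrank.symm⟩

end Labels

section Diagrams

variable {n : ℕ} {f g : Fin n → Fin n} {a : PElt n}

/-- A partition diagram turned upside down. -/
@[reducible]
def upsideDown (a : PElt n) : PElt n := Setoid.comap Sum.swap a

/-- The name of the block of a vertex when `f` is drawn above `g`. Transversals get names that do
not mention the row. -/
def vertexLabel (f g : Fin n → Fin n) : PV n → ℕ ⊕ PV n :=
  Sum.elim (Sum.map id .inl ∘ halfLabel f) (Sum.map id .inr ∘ halfLabel g)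

/-- The partition with upper half diagram `f` and lower half diagram `g`. -/
@[reducible]
def ofHalves (f g : Fin n → Fin n) : PElt n := Setoid.ker (vertexLabel f g)

/-- Two half diagrams with equally many defects, i.e. the two halves of a Jones element. -/
structure IsJonesPair (f g : Fin n → Fin n) : Prop where
  upper : IsHalfDiagram f
  lower : IsHalfDiagram g
  card_defects : #(defects f) = #(defects g)

theorem IsJonesPair.symm (h : IsJonesPair f g) : IsJonesPair g f :=
  ⟨h.lower, h.upper, h.card_defects.symm⟩

theorem upsideDown_rel {x y : PV n} : (upsideDown a).r x y ↔ a.r x.swap y.swap := Iff.rfl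

theorem upsideDown_ofHalves (f g : Fin n → Fin n) : upsideDown (ofHalves f g) = ofHalves g f := by
  have hlabel : ∀ x, vertexLabel f g x.swap = Sum.map id Sum.swap (vertexLabel g f x) := by
    rintro (i | i) <;> simp [vertexLabel, Sum.map_map, Function.comp_def]
  have hinj : Function.Injective (Sum.map id Sum.swap : ℕ ⊕ PV n → ℕ ⊕ PV n) :=
    Function.injective_id.sumMap Sum.swap_leftInverse.injective
  ext x y
  change vertexLabel f g x.swap = vertexLabel f g y.swap ↔ vertexLabel g f x = vertexLabel g f y
  rw [hlabel, hlabel, hinj.eq_iff]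

theorem ofHalves_rel_inl_inl (hf : Function.Involutive f) (i j : Fin n) :
    (ofHalves f g).r (.inl i) (.inl j) ↔ i = j ∨ f i = j := by
  rw [← halfLabel_eq_iff hf]
  exact (Function.injective_id.sumMap Sum.inl_injective).eq_iff

theorem ofHalves_rel_inr_inr (hg : Function.Involutive g) (i j : Fin n) :
    (ofHalves f g).r (.inr i) (.inr j) ↔ i = j ∨ g i = j := by
  rw [← upsideDown_ofHalves]
  exact ofHalves_rel_inl_inl hg i j

theorem ofHalves_rel_inl_inr (f g : Fin n → Fin n) (i j : Fin n) :
    (ofHalves f g).r (.inl i) (.inr j) ↔ IsTransversal f g i j := by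
  change vertexLabel f g (.inl i) = vertexLabel f g (.inr j) ↔ _
  simp only [vertexLabel, halfLabel, IsTransversal, Sum.elim_inl, Sum.elim_inr, Function.comp_apply]
  split_ifs with hi hj hj <;> simp [hi, hj]

theorem ofHalves_rel_inr_inl (f g : Fin n → Fin n) (i j : Fin n) :
    (ofHalves f g).r (.inr j) (.inl i) ↔ IsTransversal f g i j := by
  rw [← upsideDown_ofHalves, isTransversal_comm]
  exact ofHalves_rel_inl_inr g f j i

theorem ofHalves_injOn :
    Set.InjOn (fun p : (Fin n → Fin n) × (Fin n → Fin n) => ofHalves p.1 p.2)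
      {p | IsJonesPair p.1 p.2} := by
  have hupper : ∀ {f g f' g' : Fin n → Fin n}, IsJonesPair f g → IsJonesPair f' g' →
      ofHalves f g = ofHalves f' g' → f = f' := by
    intro f g f' g' h h' heq
    have hrel : ∀ i j, (i = j ∨ f i = j) ↔ (i = j ∨ f' i = j) := fun i j => by
      rw [← ofHalves_rel_inl_inl h.upper.involutive (g := g), heq,
        ofHalves_rel_inl_inl h'.upper.involutive]
    funext i
    have := hrel i (f i)
    have := hrel i (f' i)
    grind
  rintro ⟨f, g⟩ h ⟨f', g'⟩ h' heq
  refine Prod.ext (hupper h h' heq) (hupper (IsJonesPair.symm h) (IsJonesPair.symm h') ?_)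
  change ofHalves g f = ofHalves g' f'
  rw [← upsideDown_ofHalves, ← upsideDown_ofHalves f']
  exact congrArg upsideDown heq

theorem blockCard_eq_two_iff {x : PV n} :
    blockCard a x = 2 ↔ ∃ y, y ≠ x ∧ ∀ z, a.r x z ↔ z = x ∨ z = y := by
  change Set.ncard {y | a.r x y} = 2 ↔ _
  rw [Set.ncard_eq_two]
  have hx : a.r x x := a.refl x
  constructor
  · rintro ⟨u, v, huv, h⟩
    have huv' : ∀ z, a.r x z ↔ z = u ∨ z = v := fun z => Set.ext_iff.1 h z
    obtain rfl | rfl := (huv' x).1 hx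
    · exact ⟨v, huv.symm, huv'⟩
    · exact ⟨u, huv, fun z => (huv' z).trans or_comm⟩
  · rintro ⟨y, hyx, h⟩
    exact ⟨x, y, hyx.symm, Set.ext h⟩

theorem blockCard_upsideDown (x : PV n) : blockCard (upsideDown a) x = blockCard a x.swap :=
  Nat.card_congr ((Equiv.sumComm _ _).subtypeEquiv fun _ => Iff.rfl)

theorem ordIdx_swap_lt_ordIdx_swap {x y : PV n} :
    ordIdx n x.swap < ordIdx n y.swap ↔ ordIdx n y < ordIdx n x := by
  rcases x with x | x <;> rcases y with y | y <;>
    simp only [ordIdx, Sum.swap_inl, Sum.swap_inr] <;> omega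

theorem ordIdx_injective : Function.Injective (ordIdx n) := by
  rintro (i | i) (j | j) h <;> simp only [ordIdx] at h
  · rw [Fin.ext h]
  · omega
  · omega
  · rw [Fin.ext (by omega : i.val = j)]

theorem IsPlanar.upsideDown (ha : IsPlanar a) : IsPlanar (upsideDown a) := by
  rintro ⟨w, x, y, z, hwx, hxy, hyz, hwy, hxz, hn⟩
  have hord := @ordIdx_swap_lt_ordIdx_swap n
  exact ha ⟨z.swap, y.swap, x.swap, w.swap, hord.2 hyz, hord.2 hxy, hord.2 hwx,
    a.symm hxz, a.symm hwy, fun h => hn (a.trans hwy (a.symm (a.trans hxz h)))⟩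

theorem IsJonesPair.not_crossing_of_inl (h : IsJonesPair f g) {w y z : PV n} {x : Fin n}
    (hwx : ordIdx n w < ordIdx n (.inl x)) (hxy : ordIdx n (.inl x) < ordIdx n y)
    (hyz : ordIdx n y < ordIdx n z) (hwy : (ofHalves f g).r w y)
    (hxz : (ofHalves f g).r (.inl x) z) : False := by
  have hf := h.upper.involutive
  rcases w with w | w
  swap
  · simp only [ordIdx] at hwx
    omega
  have hwx : w < x := hwx
  rcases y with y | y <;> rcases z with z | z
  · have hfw := ((ofHalves_rel_inl_inl hf w y).1 hwy).resolve_left (hwx.trans hxy).ne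
    have hxz' : x < z := hxy.trans hyz
    have hfx := ((ofHalves_rel_inl_inl hf x z).1 hxz).resolve_left hxz'.ne
    exact lt_asymm (hfx ▸ hfw ▸ (h.upper.nested w x hwx (hfw ▸ hxy)).2.2) hyz
  · have hfw := ((ofHalves_rel_inl_inl hf w y).1 hwy).resolve_left (hwx.trans hxy).ne
    exact (h.upper.nested w x hwx (hfw ▸ hxy)).1 ((ofHalves_rel_inl_inr f g x z).1 hxz).1
  · simp only [ordIdx] at hyz
    omega
  · have := ((ofHalves_rel_inl_inr f g w y).1 hwy).lt ((ofHalves_rel_inl_inr f g x z).1 hxz) hwx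
    simp only [ordIdx] at hyz
    omega

theorem IsJonesPair.isPlanar (h : IsJonesPair f g) : IsPlanar (ofHalves f g) := by
  rintro ⟨w, x, y, z, hwx, hxy, hyz, hwy, hxz, -⟩
  rcases x with x | x
  · exact h.not_crossing_of_inl hwx hxy hyz hwy hxz
  rcases y with y | y
  · simp only [ordIdx] at hxy
    omega
  have hord := @ordIdx_swap_lt_ordIdx_swap n
  have hflip : ∀ u v, (ofHalves f g).r u v → (ofHalves g f).r v.swap u.swap := fun u v huv => by
    rw [← upsideDown_ofHalves, upsideDown_rel, Sum.swap_swap, Sum.swap_swap]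
    exact (ofHalves f g).symm huv
  exact h.symm.not_crossing_of_inl (hord.2 hyz) (hord.2 hxy) (hord.2 hwx) (hflip _ _ hxz)
    (hflip _ _ hwy)

theorem IsJonesPair.blockCard_inl (h : IsJonesPair f g) (i : Fin n) :
    blockCard (ofHalves f g) (.inl i) = 2 := by
  rw [blockCard_eq_two_iff]
  have hll := ofHalves_rel_inl_inl (g := g) h.upper.involutive i
  have hlr := ofHalves_rel_inl_inr f g i
  by_cases hi : f i = i
  · obtain ⟨j, hj⟩ := exists_isTransversal h.card_defects hi
    refine ⟨.inr j, by simp, Sum.rec (fun k => ?_) fun k => ?_⟩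
    · rw [hll, hi]
      simp [eq_comm]
    · rw [hlr]
      simp only [reduceCtorEq, Sum.inr.injEq, false_or]
      exact ⟨fun hk => hk.right_unique hj, fun hk => hk ▸ hj⟩
  · refine ⟨.inl (f i), by simpa using hi, Sum.rec (fun k => ?_) fun k => ?_⟩
    · rw [hll]
      simp [eq_comm]
    · rw [hlr]
      simpa using fun hk => hi hk.1

theorem IsJonesPair.ofHalves_mem_jones (h : IsJonesPair f g) : ofHalves f g ∈ Jones n := by
  refine ⟨h.isPlanar, Sum.rec h.blockCard_inl fun i => ?_⟩
  rw [← upsideDown_ofHalves, blockCard_upsideDown]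
  exact h.symm.blockCard_inl i

end Diagrams

section Partners

variable {n : ℕ} {a : PElt n} {P : PV n → PV n}

/-- `P` exchanges the two vertices of every block of `a`. -/
structure IsPartner (a : PElt n) (P : PV n → PV n) : Prop where
  ne : ∀ x, P x ≠ x
  rel_iff : ∀ x z, a.r x z ↔ z = x ∨ z = P x

/-- The half diagram of the upper row, where `P` exchanges the two vertices of every block. -/
def upperHalf (P : PV n → PV n) (i : Fin n) : Fin n := (P (.inl i)).elim id fun _ => i

/-- The half diagram of the lower row, where `P` exchanges the two vertices of every block. -/
def lowerHalf (P : PV n → PV n) : Fin n → Fin n := upperHalf fun x => (P x.swap).swap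

theorem exists_isPartner (ha : ∀ x, blockCard a x = 2) : ∃ P, IsPartner a P := by
  choose P hne hrel using fun x => blockCard_eq_two_iff.1 (ha x)
  exact ⟨P, hne, hrel⟩

theorem IsPartner.rel (hP : IsPartner a P) (x : PV n) : a.r x (P x) :=
  (hP.rel_iff x (P x)).2 (.inr rfl)

theorem IsPartner.involutive (hP : IsPartner a P) : Function.Involutive P := fun x =>
  (((hP.rel_iff _ _).1 (a.symm (hP.rel x))).resolve_left (hP.ne x).symm).symm

theorem IsPartner.upsideDown (hP : IsPartner a P) :
    IsPartner (upsideDown a) fun x => (P x.swap).swap where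
  ne x h := hP.ne x.swap ((Sum.swap_swap _).symm.trans (congrArg Sum.swap h))
  rel_iff x z := by
    rw [upsideDown_rel, hP.rel_iff, Sum.swap_leftInverse.injective.eq_iff]
    exact or_congr_right ⟨fun h => h ▸ (Sum.swap_swap z).symm, fun h => h ▸ Sum.swap_swap _⟩

theorem IsPartner.nested (hP : IsPartner a P) (ha : IsPlanar a) {w x : PV n}
    (hwx : ordIdx n w < ordIdx n x) (hxw : ordIdx n x < ordIdx n (P w)) :
    ordIdx n w < ordIdx n (P x) ∧ ordIdx n (P x) < ordIdx n (P w) := by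
  have hwP : x ≠ P w := by rintro rfl; exact hxw.false
  have hn : ¬ a.r w x := fun h => ((hP.rel_iff w x).1 h).elim (by rintro rfl; exact hwx.false) hwP
  have hPxw : P x ≠ w := fun h => hn (h ▸ a.symm (hP.rel x))
  have hPx : P x ≠ P w := fun h => hwx.ne (by rw [hP.involutive.injective h])
  constructor
  · by_contra! hle
    exact ha ⟨P x, w, x, P w, hle.lt_of_ne (ordIdx_injective.ne hPxw), hwx, hxw,
      a.symm (hP.rel x), hP.rel w, fun h => hn (a.symm (a.trans (hP.rel x) h))⟩
  · by_contra! hle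
    exact ha ⟨w, x, P w, P x, hwx, hxw, hle.lt_of_ne (ordIdx_injective.ne hPx.symm), hP.rel w,
      hP.rel x, hn⟩

theorem upperHalf_eq_of_inl {i j : Fin n} (h : P (.inl i) = .inl j) : upperHalf P i = j := by
  simp [upperHalf, h]

theorem upperHalf_eq_of_inr {i j : Fin n} (h : P (.inl i) = .inr j) : upperHalf P i = i := by
  simp [upperHalf, h]

theorem lowerHalf_eq_of_inl {i j : Fin n} (h : P (.inr j) = .inl i) : lowerHalf P j = j :=
  upperHalf_eq_of_inr (j := i) (by simp [h])

theorem IsPartner.upperHalf_eq_self_iff (hP : IsPartner a P) {i : Fin n} :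
    upperHalf P i = i ↔ ∃ j, P (.inl i) = .inr j := by
  refine ⟨fun h => ?_, fun ⟨j, hj⟩ => upperHalf_eq_of_inr hj⟩
  rcases hPi : P (.inl i) with j | j
  · rw [upperHalf_eq_of_inl hPi] at h
    exact absurd (h ▸ hPi) (hP.ne _)
  · exact ⟨j, rfl⟩

theorem IsPartner.isHalfDiagram_upperHalf (hP : IsPartner a P) (ha : IsPlanar a) :
    IsHalfDiagram (upperHalf P) := by
  refine ⟨fun i => ?_, fun w x hwx hxw => ?_⟩
  · rcases hi : P (.inl i) with j | j
    · rw [upperHalf_eq_of_inl hi]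
      exact upperHalf_eq_of_inl (hi ▸ hP.involutive _)
    · rw [upperHalf_eq_of_inr hi, upperHalf_eq_of_inr hi]
  · rcases hw : P (.inl w) with y | y
    · rw [upperHalf_eq_of_inl hw] at hxw ⊢
      obtain ⟨h₁, h₂⟩ := hP.nested ha (w := .inl w) (x := .inl x) hwx (by rwa [hw])
      rcases hx : P (.inl x) with z | z
      · rw [hw, hx] at h₂
        rw [hx] at h₁
        rw [upperHalf_eq_of_inl hx]
        refine ⟨fun h => hP.ne (.inl x) (by rw [hx, h]), h₁, h₂⟩
      · rw [hw, hx] at h₂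
        simp only [ordIdx] at h₂
        omega
    · rw [upperHalf_eq_of_inr hw] at hxw
      exact absurd hxw hwx.not_gt

theorem IsPartner.lt_of_inr (hP : IsPartner a P) (ha : IsPlanar a) {i i' j j' : Fin n}
    (hi : P (.inl i) = .inr j) (hi' : P (.inl i') = .inr j') (h : i < i') : j < j' := by
  have := (hP.nested ha (w := .inl i) (x := .inl i') h (by rw [hi]; simp only [ordIdx]; omega)).2
  rw [hi, hi'] at this
  simp only [ordIdx] at this
  omega

theorem IsPartner.exists_strictMonoOn_defects (hP : IsPartner a P) (ha : IsPlanar a) :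
    ∃ φ : Fin n → Fin n, (∀ i j, P (.inl i) = .inr j → φ i = j) ∧
      StrictMonoOn φ (defects (upperHalf P)) ∧
      (defects (upperHalf P)).image φ = defects (lowerHalf P) := by
  refine ⟨fun i => (P (.inl i)).elim (fun _ => i) id, ?_, ?_, ?_⟩
  · intro i j h
    simp [h]
  · intro i hi i' hi' hlt
    obtain ⟨j, hj⟩ := hP.upperHalf_eq_self_iff.1 (mem_defects.1 hi)
    obtain ⟨j', hj'⟩ := hP.upperHalf_eq_self_iff.1 (mem_defects.1 hi')
    simpa [hj, hj'] using hP.lt_of_inr ha hj hj' hlt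
  · ext j
    rw [mem_image, mem_defects, lowerHalf, hP.upsideDown.upperHalf_eq_self_iff]
    constructor
    · rintro ⟨i, hi, rfl⟩
      obtain ⟨j, hj⟩ := hP.upperHalf_eq_self_iff.1 (mem_defects.1 hi)
      refine ⟨i, ?_⟩
      have hPj : P (.inr j) = .inl i := hj ▸ hP.involutive _
      simp only [hj, Sum.elim_inr, id_eq, Sum.swap_inl, hPj]
    · rintro ⟨i, hi⟩
      have hi : P (.inl i) = .inr j := by
        rw [← hP.involutive (.inr j), ← Sum.swap_swap (P (.inr j))]
        exact congrArg (P ∘ Sum.swap) hi.symm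
      exact ⟨i, mem_defects.2 (upperHalf_eq_of_inr hi), by simp [hi]⟩

theorem IsPartner.isJonesPair (hP : IsPartner a P) (ha : IsPlanar a) :
    IsJonesPair (upperHalf P) (lowerHalf P) := by
  refine ⟨hP.isHalfDiagram_upperHalf ha, hP.upsideDown.isHalfDiagram_upperHalf ha.upsideDown, ?_⟩
  obtain ⟨φ, -, hmono, himage⟩ := hP.exists_strictMonoOn_defects ha
  rw [← himage, card_image_of_injOn hmono.injOn]

theorem IsPartner.isTransversal_iff (hP : IsPartner a P) (ha : IsPlanar a) {i j : Fin n} :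
    IsTransversal (upperHalf P) (lowerHalf P) i j ↔ P (.inl i) = .inr j := by
  obtain ⟨φ, hφ, hmono, himage⟩ := hP.exists_strictMonoOn_defects ha
  have key : ∀ k, P (.inl i) = .inr k → IsTransversal (upperHalf P) (lowerHalf P) i k :=
    fun k hk => by
    have hi := upperHalf_eq_of_inr hk
    refine ⟨hi, lowerHalf_eq_of_inl (by rw [← hk, hP.involutive]), ?_⟩
    rw [← himage, ← hφ i k hk, rankIn_image hmono (mem_defects.2 hi)]
  refine ⟨fun h => ?_, key j⟩
  obtain ⟨k, hk⟩ := hP.upperHalf_eq_self_iff.1 h.1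
  rw [h.right_unique (key k hk), hk]

theorem IsPartner.ofHalves_eq (hP : IsPartner a P) (ha : IsPlanar a) :
    ofHalves (upperHalf P) (lowerHalf P) = a := by
  have h := hP.isJonesPair ha
  have hll : ∀ {a P}, IsPartner a P → ∀ i j : Fin n,
      (i = j ∨ upperHalf P i = j) ↔ a.r (.inl i) (.inl j) := by
    intro a P hP i j
    rw [hP.rel_iff, Sum.inl.injEq, eq_comm]
    refine or_congr_right' fun hji => ⟨fun hPi => ?_, fun hPi => upperHalf_eq_of_inl hPi.symm⟩
    rcases hPi' : P (.inl i) with k | k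
    · rw [← hPi, upperHalf_eq_of_inl hPi']
    · exact absurd (hPi.symm.trans (upperHalf_eq_of_inr hPi')) hji
  have hlr : ∀ i j, IsTransversal (upperHalf P) (lowerHalf P) i j ↔ a.r (.inl i) (.inr j) := by
    intro i j
    rw [hP.isTransversal_iff ha, hP.rel_iff, eq_comm]
    simp
  ext x y
  rcases x with i | i <;> rcases y with j | j
  · exact (ofHalves_rel_inl_inl h.upper.involutive i j).trans (hll hP i j)
  · exact (ofHalves_rel_inl_inr _ _ i j).trans (hlr i j)
  · exact ((ofHalves_rel_inr_inl _ _ j i).trans (hlr j i)).trans ⟨a.symm, a.symm⟩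
  · exact (ofHalves_rel_inr_inr h.lower.involutive i j).trans (hll hP.upsideDown i j)

theorem exists_ofHalves_eq (ha : a ∈ Jones n) : ∃ f g, IsJonesPair f g ∧ ofHalves f g = a := by
  obtain ⟨P, hP⟩ := exists_isPartner ha.2
  exact ⟨upperHalf P, lowerHalf P, hP.isJonesPair ha.1, hP.ofHalves_eq ha.1⟩

end Partners

/-! ### The interface graph and idempotency -/

section Connected

variable {α : Type*} {f g : α → α} {i j k : α}

/-- Connectivity in the graph formed by the arcs of two half diagrams. -/
def Connected (f g : α → α) : α → α → Prop := EqvGen fun i j => f i = j ∨ g i = j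

theorem Connected.refl (i : α) : Connected f g i i := EqvGen.refl i

theorem Connected.symm (h : Connected f g i j) : Connected f g j i := EqvGen.symm _ _ h

theorem Connected.trans (h : Connected f g i j) (h' : Connected f g j k) : Connected f g i k :=
  EqvGen.trans _ _ _ h h'

theorem connected_left (i : α) : Connected f g i (f i) := EqvGen.rel _ _ (.inl rfl)

theorem connected_right (i : α) : Connected f g i (g i) := EqvGen.rel _ _ (.inr rfl)

theorem connected_comm : Connected f g i j ↔ Connected f g j i := ⟨.symm, .symm⟩

theorem Connected.iff_of_invariant {S : α → Prop} (h : Connected f g i j)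
    (hf : ∀ i, S (f i) ↔ S i) (hg : ∀ i, S (g i) ↔ S i) : S i ↔ S j := by
  induction h with
  | rel i j h => exact h.elim (fun h => h ▸ (hf i).symm) fun h => h ▸ (hg i).symm
  | refl i => exact Iff.rfl
  | symm i j _ ih => exact ih.symm
  | trans i j k _ _ ih ih' => exact ih.trans ih'

theorem connected_left_iff : Connected f g i (f j) ↔ Connected f g i j :=
  ⟨fun h => h.trans (connected_left j).symm, fun h => h.trans (connected_left j)⟩

theorem connected_right_iff : Connected f g i (g j) ↔ Connected f g i j :=
  ⟨fun h => h.trans (connected_right j).symm, fun h => h.trans (connected_right j)⟩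

/-- The connected component of `i`. -/
def component (f g : α → α) (i : α) : Set α := {j | Connected f g i j}

theorem component_eq_component_iff :
    component f g i = component f g j ↔ Connected f g i j := by
  refine ⟨fun h => ?_, fun h => Set.ext fun k => ⟨h.symm.trans, h.trans⟩⟩
  change j ∈ component f g i
  rw [h]
  exact Connected.refl j

end Connected

section InterfaceGraph

variable {n : ℕ} {f g : Fin n → Fin n} {i j : Fin n} {θ : Set (Fin n)}

theorem lowEdge_ofHalves_iff (hf : Function.Involutive f) :
    LowEdge (ofHalves f g) i j ↔ i ≠ j ∧ f i = j := by
  rw [LowEdge, ofHalves_rel_inl_inl hf]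
  tauto

theorem upEdge_ofHalves_iff (hg : Function.Involutive g) :
    UpEdge (ofHalves f g) i j ↔ i ≠ j ∧ g i = j := by
  rw [UpEdge, ofHalves_rel_inr_inr hg]
  tauto

theorem hasLow_ofHalves_iff (hf : Function.Involutive f) :
    hasLow (ofHalves f g) i ↔ f i ≠ i := by
  simp [hasLow, lowEdge_ofHalves_iff hf, eq_comm]

theorem hasUp_ofHalves_iff (hg : Function.Involutive g) :
    hasUp (ofHalves f g) i ↔ g i ≠ i := by
  simp [hasUp, upEdge_ofHalves_iff hg, eq_comm]

theorem gconn_ofHalves_iff (hf : Function.Involutive f) (hg : Function.Involutive g) :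
    gconn (ofHalves f g) i j ↔ Connected f g i j := by
  have hedge : ∀ i j, gedge (ofHalves f g) i j ↔ i ≠ j ∧ (f i = j ∨ g i = j) := fun i j => by
    rw [gedge, lowEdge_ofHalves_iff hf, upEdge_ofHalves_iff hg, and_or_left]
  constructor <;> intro h
  · exact EqvGen.mono (fun i j h => ((hedge i j).1 h).2) i j h
  · induction h with
    | rel i j h =>
      by_cases hij : i = j
      · exact hij ▸ EqvGen.refl i
      · exact EqvGen.rel i j ((hedge i j).2 ⟨hij, h⟩)
    | refl i => exact EqvGen.refl i
    | symm i j _ ih => exact EqvGen.symm i j ih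
    | trans i j k _ _ ih ih' => exact EqvGen.trans i j k ih ih'

theorem isComp_ofHalves_iff (hf : Function.Involutive f) (hg : Function.Involutive g) :
    IsComp (ofHalves f g) θ ↔ ∃ i, component f g i = θ := by
  simp only [IsComp, gconn_ofHalves_iff hf hg]
  constructor
  · rintro ⟨⟨i, hi⟩, h⟩
    exact ⟨i, Set.ext (h i hi)⟩
  · rintro ⟨i, rfl⟩
    exact ⟨⟨i, Connected.refl i⟩, fun j hj k => ⟨hj.trans, hj.symm.trans⟩⟩

end InterfaceGraph

section Idempotents

/-- The condition on the interface graph that makes `ofHalves f g` idempotent: every transversal of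
the product of two copies follows a path of the interface graph, which must end where the
corresponding transversal of the single diagram ends. -/
structure IsIdempotentPair {α : Type*} [LinearOrder α] [Fintype α] (f g : α → α) : Prop where
  connected : ∀ i j, IsTransversal f g i j → Connected f g i j
  eq_of_connected : ∀ i j, g i = i → g j = j → Connected f g i j → i = j

variable {n : ℕ} {f g : Fin n → Fin n} {a b : PElt n}

theorem stackSetoid_le_iff {s : Setoid (TV n)} :
    stackSetoid a b ≤ s ↔ a ≤ s.comap upEmb ∧ b ≤ s.comap downEmb := by
  constructor
  · refine fun h => ⟨fun p q hpq => ?_, fun p q hpq => ?_⟩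
    · exact h (EqvGen.rel _ _ (.inl ⟨p, q, hpq, rfl, rfl⟩))
    · exact h (EqvGen.rel _ _ (.inr ⟨p, q, hpq, rfl, rfl⟩))
  · rintro ⟨ha, hb⟩
    refine Setoid.eqvGen_le ?_
    rintro _ _ (⟨p, q, hpq, rfl, rfl⟩ | ⟨p, q, hpq, rfl, rfl⟩)
    · exact ha hpq
    · exact hb hpq

theorem le_comap_upEmb : a ≤ (stackSetoid a b).comap upEmb := (stackSetoid_le_iff.1 le_rfl).1

theorem le_comap_downEmb : b ≤ (stackSetoid a b).comap downEmb := (stackSetoid_le_iff.1 le_rfl).2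

theorem ofHalves_le_iff (hf : Function.Involutive f) (hg : Function.Involutive g)
    {s : Setoid (PV n)} :
    ofHalves f g ≤ s ↔ (∀ i, s.r (.inl i) (.inl (f i))) ∧ (∀ j, s.r (.inr j) (.inr (g j))) ∧
      ∀ i j, IsTransversal f g i j → s.r (.inl i) (.inr j) := by
  constructor
  · exact fun h => ⟨fun i => h ((ofHalves_rel_inl_inl hf i _).2 (.inr rfl)),
      fun j => h ((ofHalves_rel_inr_inr hg j _).2 (.inr rfl)),
      fun i j hij => h ((ofHalves_rel_inl_inr f g i j).2 hij)⟩
  · rintro ⟨hl, hr, ht⟩ (i | i) (j | j) hij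
    · obtain rfl | rfl := (ofHalves_rel_inl_inl hf i j).1 hij
      exacts [s.refl _, hl i]
    · exact ht i j ((ofHalves_rel_inl_inr f g i j).1 hij)
    · exact s.symm (ht j i ((ofHalves_rel_inr_inl f g j i).1 hij))
    · obtain rfl | rfl := (ofHalves_rel_inr_inr hg i j).1 hij
      exacts [s.refl _, hr i]

theorem Connected.stackSetoid_middle (hf : Function.Involutive f) (hg : Function.Involutive g)
    {i j : Fin n} (h : Connected f g i j) :
    (stackSetoid (ofHalves f g) (ofHalves f g)).r (.inr (.inl i)) (.inr (.inl j)) := by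
  obtain ⟨-, hmid, -⟩ := (ofHalves_le_iff hf hg).1 (le_comap_upEmb (b := ofHalves f g))
  obtain ⟨hmid', -, -⟩ := (ofHalves_le_iff hf hg).1 (le_comap_downEmb (a := ofHalves f g))
  let s := stackSetoid (ofHalves f g) (ofHalves f g)
  induction h with
  | rel i j h => exact h.elim (fun h => h ▸ hmid' i) fun h => h ▸ hmid i
  | refl i => exact s.refl _
  | symm i j _ ih => exact s.symm ih
  | trans i j k _ _ ih ih' => exact s.trans ih ih'

theorem IsIdempotentPair.le_pmul (h : IsIdempotentPair f g) (hf : Function.Involutive f)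
    (hg : Function.Involutive g) : ofHalves f g ≤ pmul (ofHalves f g) (ofHalves f g) := by
  obtain ⟨htop, -, htop_mid⟩ := (ofHalves_le_iff hf hg).1 (le_comap_upEmb (b := ofHalves f g))
  obtain ⟨-, hbot, hmid_bot⟩ := (ofHalves_le_iff hf hg).1 (le_comap_downEmb (a := ofHalves f g))
  refine (ofHalves_le_iff hf hg).2 ⟨htop, hbot, fun i j hij => ?_⟩
  let s := stackSetoid (ofHalves f g) (ofHalves f g)
  exact s.trans (s.trans (htop_mid i j hij)
    ((h.connected i j hij).symm.stackSetoid_middle hf hg)) (hmid_bot i j hij)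

theorem IsIdempotentPair.pmul_le (h : IsIdempotentPair f g) (hf : Function.Involutive f)
    (hg : Function.Involutive g) : pmul (ofHalves f g) (ofHalves f g) ≤ ofHalves f g := by
  set a := ofHalves f g with ha
  -- A middle vertex is labelled by the block of the lower defect in its component, if any.
  let label : TV n → Set (PV n) := Sum.elim (fun i => {x | a.r x (.inl i)}) <| Sum.elim
    (fun i => {x | ∃ r, Connected f g r i ∧ g r = r ∧ a.r x (.inr r)}) fun j => {x | a.r x (.inr j)}
  have hlabel : ∀ x y, a.r x y ↔ x ∈ label (outEmb y) := fun x y => by rcases y with y | y <;> rfl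
  have ha_eq : ∀ {y z}, a.r y z → {x | a.r x y} = {x | a.r x z} := fun hyz =>
    Set.ext fun x => ⟨fun hxy => a.trans hxy hyz, fun hxz => a.trans hxz (a.symm hyz)⟩
  have hmid : ∀ i j, g j = j → Connected f g i j →
      label (.inr (.inl i)) = label (.inr (.inr j)) := fun i j hj hij => Set.ext fun x => by
    refine ⟨?_, fun hx => ⟨j, hij.symm, hj, hx⟩⟩
    rintro ⟨r, hri, hr, hx⟩
    exact h.eq_of_connected r j hr hj (hri.trans hij) ▸ hx
  obtain ⟨hl, hr, ht⟩ := (ofHalves_le_iff hf hg).1 ha.ge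
  have hstack : stackSetoid a a ≤ Setoid.ker label := by
    rw [stackSetoid_le_iff, ha, ofHalves_le_iff hf hg, ofHalves_le_iff hf hg]
    refine ⟨⟨fun i => ha_eq (hl i), fun j => ?_, fun i j hij => ?_⟩,
      fun i => ?_, fun j => ha_eq (hr j), fun i j hij => ?_⟩
    · exact Set.ext fun x => by
        simp only [label, Sum.elim_inl, Sum.elim_inr, upEmb, connected_right_iff]
    · exact (ha_eq (ht i j hij)).trans (hmid j j hij.2.1 (.refl j)).symm
    · exact Set.ext fun x => by
        simp only [label, Sum.elim_inl, Sum.elim_inr, downEmb, connected_left_iff]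
    · exact hmid i j hij.2.1 (h.connected i j hij)
  intro x y hxy
  rw [hlabel, ← show label (outEmb x) = label (outEmb y) from hstack hxy, ← hlabel]

theorem eq_of_connected_of_pmul_eq (hf : Function.Involutive f) (hg : Function.Involutive g)
    (hcard : #(defects f) = #(defects g))
    (h : pmul (ofHalves f g) (ofHalves f g) = ofHalves f g) {i j : Fin n} (hi : g i = i)
    (hj : g j = j) (hij : Connected f g i j) : i = j := by
  obtain ⟨-, -, htop_mid⟩ := (ofHalves_le_iff hf hg).1 (le_comap_upEmb (b := ofHalves f g))
  obtain ⟨p, hp⟩ := exists_isTransversal hcard.symm hi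
  obtain ⟨q, hq⟩ := exists_isTransversal hcard.symm hj
  let s := stackSetoid (ofHalves f g) (ofHalves f g)
  have hpq : (pmul (ofHalves f g) (ofHalves f g)).r (.inl p) (.inl q) :=
    s.trans (s.trans (htop_mid p i hp.symm) (hij.stackSetoid_middle hf hg))
      (s.symm (htop_mid q j hq.symm))
  rw [h, ofHalves_rel_inl_inl hf, hp.2.1, or_self] at hpq
  exact hp.symm.right_unique (hpq ▸ hq.symm)

theorem isIdempotentPair_of_pmul_eq (hf : Function.Involutive f) (hg : Function.Involutive g)
    (hcard : #(defects f) = #(defects g))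
    (h : pmul (ofHalves f g) (ofHalves f g) = ofHalves f g) : IsIdempotentPair f g := by
  have heq_of_connected := @eq_of_connected_of_pmul_eq n f g hf hg hcard h
  refine ⟨fun p r hpr => ?_, fun _ _ => heq_of_connected⟩
  -- The component of the top vertex `p` in the stack of two copies.
  let S : TV n → Prop := Sum.elim (· = p) <| Sum.elim (Connected f g r) fun j =>
    ∃ q, Connected f g r q ∧ IsTransversal f g q j
  have hS : stackSetoid (ofHalves f g) (ofHalves f g) ≤ Setoid.ker S := by
    rw [stackSetoid_le_iff, ofHalves_le_iff hf hg, ofHalves_le_iff hf hg]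
    refine ⟨⟨fun i => propext ?_, fun j => propext connected_right_iff.symm,
        fun i j hij => propext ?_⟩,
      fun i => propext connected_left_iff.symm, fun j => propext ?_, fun i j hij => propext ?_⟩
    · exact ⟨fun (hi : i = p) => show f i = p by rw [hi, hpr.1],
        fun (hi : f i = p) => show i = p by rw [hf.eq_iff.1 hi, hpr.1]⟩
    · refine ⟨fun hi => ?_, fun hj => ?_⟩
      · exact hpr.right_unique (hi ▸ hij) ▸ .refl r
      · exact (heq_of_connected hpr.2.1 hij.2.1 hj ▸ hij).left_unique hpr
    · refine exists_congr fun q => and_congr_right fun _ => ⟨fun hq => ?_, fun hq => ?_⟩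
      · exact hq.2.1.symm ▸ hq
      · exact hg.injective hq.2.1 ▸ hq
    · exact ⟨fun hi => ⟨i, hi, hij⟩, fun ⟨q, hq, hqj⟩ => hqj.left_unique hij ▸ hq⟩
  have hpr' : (pmul (ofHalves f g) (ofHalves f g)).r (.inl p) (.inr r) := by
    rwa [h, ofHalves_rel_inl_inr]
  have hbot : S (.inl p) = S (.inr (.inr r)) := hS hpr'
  obtain ⟨q, hq, hqr⟩ : S (.inr (.inr r)) := hbot ▸ rfl
  exact hqr.left_unique hpr ▸ hq.symm

theorem IsJonesPair.pmul_self_eq_iff (h : IsJonesPair f g) :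
    pmul (ofHalves f g) (ofHalves f g) = ofHalves f g ↔ IsIdempotentPair f g := by
  have hf := h.upper.involutive
  have hg := h.lower.involutive
  exact ⟨isIdempotentPair_of_pmul_eq hf hg h.card_defects,
    fun hid => le_antisymm (hid.pmul_le hf hg) (hid.le_pmul hf hg)⟩

theorem IsIdempotentPair.isPathComp_iff (hid : IsIdempotentPair f g) (h : IsJonesPair f g)
    {θ : Set (Fin n)} : IsPathComp (ofHalves f g) θ ↔ ∃ j, g j = j ∧ component f g j = θ := by
  have hf := h.upper.involutive
  have hg := h.lower.involutive
  simp only [IsPathComp, isComp_ofHalves_iff hf hg, hasLow_ofHalves_iff hf, hasUp_ofHalves_iff hg,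
    not_not]
  constructor
  · rintro ⟨⟨k, rfl⟩, i, hki, hi | hi⟩
    · obtain ⟨j, hij⟩ := exists_isTransversal h.card_defects hi
      exact ⟨j, hij.2.1, component_eq_component_iff.2 (hki.trans (hid.connected i j hij)).symm⟩
    · exact ⟨i, hi, component_eq_component_iff.2 (Connected.symm hki)⟩
  · rintro ⟨j, hj, rfl⟩
    exact ⟨⟨j, rfl⟩, j, Connected.refl j, .inr hj⟩

theorem IsIdempotentPair.numPaths_eq (hid : IsIdempotentPair f g) (h : IsJonesPair f g) :
    numPaths (ofHalves f g) = #(defects g) := by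
  have hset : {θ | IsPathComp (ofHalves f g) θ} = component f g '' defects g :=
    Set.ext fun θ => (hid.isPathComp_iff h).trans (by simp)
  change Set.ncard {θ | IsPathComp (ofHalves f g) θ} = _
  rw [hset, Set.InjOn.ncard_image, Set.ncard_coe_finset]
  exact fun i hi j hj hij => hid.eq_of_connected i j (mem_defects.1 hi) (mem_defects.1 hj)
    (component_eq_component_iff.1 hij)

end Idempotents

/-! ### Alternating signs -/

section Signs

variable {α : Type*} {f g : α → α} {s : Finset α} {i : α}

theorem even_card_of_involutive (hf : Function.Involutive f) (hs : ∀ i ∈ s, f i ∈ s)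
    (hne : ∀ i ∈ s, f i ≠ i) : Even #s := by
  rw [← ZMod.natCast_eq_zero_iff_even, ← nsmul_one, ← sum_const]
  exact sum_involution (fun i _ => f i) (fun _ _ => CharTwo.add_self_eq_zero 1)
    (fun i hi _ => hne i hi) hs fun i _ => hf i

variable [LinearOrder α] [Fintype α]

/-- The sign of a vertex, alternating from left to right. -/
def vertexSign (i : α) : ℤ := (-1) ^ rankIn univ i

namespace IsHalfDiagram

theorem vertexSign_apply_of_lt (hf : IsHalfDiagram f) (hi : i < f i) :
    vertexSign (f i) = -vertexSign i := by
  have heven : Even #{j | i < j ∧ j < f i} := by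
    refine even_card_of_involutive hf.involutive (fun j hj => ?_) fun j hj => ?_ <;>
      obtain ⟨-, hij, hji⟩ := mem_filter.1 hj
    · exact mem_filter.2 ⟨mem_univ _, (hf.nested i j hij hji).2⟩
    · exact (hf.nested i j hij hji).1
  have hrank : rankIn univ (f i) = rankIn univ i + 1 + #{j | i < j ∧ j < f i} := by
    have hsplit : univ.filter (· < f i) =
        insert i (univ.filter (· < i)) ∪ univ.filter (fun j => i < j ∧ j < f i) := by
      grind
    rw [rankIn, hsplit, card_union_of_disjoint, card_insert_of_notMem, ← rankIn]
    · simp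
    · exact disjoint_left.2 (by grind)
  rw [vertexSign, hrank, pow_add, heven.neg_one_pow, mul_one, pow_succ, mul_neg_one, vertexSign]

theorem vertexSign_apply (hf : IsHalfDiagram f) (hi : f i ≠ i) :
    vertexSign (f i) = -vertexSign i := by
  rcases lt_or_gt_of_ne hi with hlt | hlt
  · rw [← neg_eq_iff_eq_neg, ← hf.vertexSign_apply_of_lt (by rwa [hf.involutive]), hf.involutive]
  · exact hf.vertexSign_apply_of_lt hlt

theorem vertexSign_of_apply_eq_self (hf : IsHalfDiagram f) (hi : f i = i) :
    vertexSign i = (-1) ^ rankIn (defects f) i := by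
  have heven : Even #{j ∈ ({j | j < i} : Finset α) | ¬f j = j} := by
    refine even_card_of_involutive hf.involutive (fun j hj => ?_) fun j hj => (mem_filter.1 hj).2
    simp only [mem_filter, mem_univ, true_and, hf.involutive.injective.eq_iff] at hj ⊢
    refine ⟨lt_of_not_ge fun hij => ?_, hj.2⟩
    rcases hij.lt_or_eq with hlt | heq
    · exact (hf.nested j i hj.1 hlt).1 hi
    · exact hj.1.ne (by rw [← hf.involutive j, ← heq, hi])
  have hrank : rankIn (defects f) i = #{j ∈ ({j | j < i} : Finset α) | f j = j} := by
    rw [rankIn, defects, filter_comm]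
  rw [vertexSign, rankIn, ← card_filter_add_card_filter_not (fun j => f j = j), pow_add,
    heven.neg_one_pow, mul_one, hrank]

theorem sum_vertexSign (hf : IsHalfDiagram f) (hs : ∀ i ∈ s, f i ∈ s) :
    ∑ i ∈ s, vertexSign i = ∑ i ∈ s with f i = i, (-1) ^ rankIn (defects f) i := by
  have harcs : ∑ i ∈ s with ¬f i = i, vertexSign i = 0 := by
    refine sum_involution (fun i _ => f i) (fun i hi => ?_) (fun i hi _ => (mem_filter.1 hi).2)
      (fun i hi => ?_) fun i _ => hf.involutive i
    · rw [hf.vertexSign_apply (mem_filter.1 hi).2, add_neg_cancel]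
    · obtain ⟨hi, hne⟩ := mem_filter.1 hi
      exact mem_filter.2 ⟨hs i hi, fun h => hne (hf.involutive.injective h)⟩
  rw [← sum_filter_add_sum_filter_not s (fun i => f i = i), harcs, add_zero]
  exact sum_congr rfl fun i hi => hf.vertexSign_of_apply_eq_self (mem_filter.1 hi).2

open Classical in
theorem sum_defects_connected (hf : IsHalfDiagram f) (hg : IsHalfDiagram g) (i : α) :
    ∑ j ∈ defects f with Connected f g i j, (-1 : ℤ) ^ rankIn (defects f) j =
      ∑ j ∈ defects g with Connected f g i j, (-1) ^ rankIn (defects g) j := by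
  have hsf := hf.sum_vertexSign (s := {j | Connected f g i j}) (by simp [connected_left_iff])
  have hsg := hg.sum_vertexSign (s := {j | Connected f g i j}) (by simp [connected_right_iff])
  rw [defects, defects, filter_comm, ← defects, ← hsf, hsg, filter_comm, ← defects]

/-- A component of the interface graph that contains the defect of one half contains that of the
other: the signs of its vertices have the same sum computed along either half. -/
theorem isIdempotentPair_of_card_defects_le_one (hf : IsHalfDiagram f) (hg : IsHalfDiagram g)
    (hf₁ : #(defects f) ≤ 1) (hg₁ : #(defects g) ≤ 1) : IsIdempotentPair f g where
  connected p r hpr := by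
    have hp : defects f = {p} :=
      eq_singleton_iff_unique_mem.2 ⟨mem_defects.2 hpr.1, fun i hi =>
        card_le_one.1 hf₁ i hi p (mem_defects.2 hpr.1)⟩
    have hr : defects g = {r} :=
      eq_singleton_iff_unique_mem.2 ⟨mem_defects.2 hpr.2.1, fun i hi =>
        card_le_one.1 hg₁ i hi r (mem_defects.2 hpr.2.1)⟩
    by_contra hcon
    have hsum := hf.sum_defects_connected hg p
    rw [hp, hr, filter_singleton, filter_singleton, if_pos (.refl p), if_neg hcon, sum_singleton,
      sum_empty] at hsum
    exact pow_ne_zero _ (by decide) hsum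
  eq_of_connected i j hi hj _ :=
    card_le_one.1 hg₁ i (mem_defects.2 hi) j (mem_defects.2 hj)

end IsHalfDiagram

end Signs

section Dihedral

theorem mul_zpow_mul_of_sq_eq_one {G : Type*} [Group G] {a b : G} (ha : a * a = 1)
    (hb : b * b = 1) (k : ℤ) : a * (a * b) ^ k = (a * b) ^ (-k) * a := by
  have hab : SemiconjBy a (a * b) (a * b)⁻¹ := by
    rw [SemiconjBy, mul_inv_rev, inv_eq_of_mul_eq_one_left ha, inv_eq_of_mul_eq_one_left hb,
      mul_assoc b, ha, ← mul_assoc, ha, one_mul, mul_one]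
  rw [← inv_zpow', (hab.zpow_right k).eq]

variable {α : Type*} {f g : α → α} {p r s : α}

theorem Connected.mem_of_mapsTo {S : Set α} (h : Connected f g r s) (hf : Function.Involutive f)
    (hg : Function.Involutive g) (hSf : Set.MapsTo f S S) (hSg : Set.MapsTo g S S) (hr : r ∈ S) :
    s ∈ S :=
  (h.iff_of_invariant (S := (· ∈ S)) (fun x => ⟨fun hx => hf x ▸ hSf hx, fun hx => hSf hx⟩)
    fun x => ⟨fun hx => hg x ▸ hSg hx, fun hx => hSg hx⟩).1 hr

/-- A path component has at most two ends: if `r` is a defect of `g`, then `g` and `f` act on the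
orbit `(g f)ᵏ r` by `k ↦ -k` and `k ↦ -k - 1`, and a defect `p` of `f` in it forces the length of
the orbit to be odd. -/
theorem eq_of_connected_of_apply_eq_self (hf : Function.Involutive f)
    (hg : Function.Involutive g) (hp : f p = p) (hr : g r = r) (hs : g s = s)
    (hrp : Connected f g r p) (hrs : Connected f g r s) : r = s := by
  let F := hf.toPerm
  let G := hg.toPerm
  have hFF : F * F = 1 := Equiv.ext hf
  have hGG : G * G = 1 := Equiv.ext hg
  have hG : ∀ k : ℤ, g (((G * F) ^ k) r) = ((G * F) ^ (-k)) r := fun k => by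
    have h := Equiv.congr_fun (mul_zpow_mul_of_sq_eq_one hGG hFF k) r
    rwa [Equiv.Perm.mul_apply, Equiv.Perm.mul_apply, show G r = r from hr] at h
  have hF : ∀ k : ℤ, f (((G * F) ^ k) r) = ((G * F) ^ (-(k + 1))) r := fun k => by
    rw [← hG, add_comm, zpow_one_add, Equiv.Perm.mul_apply, Equiv.Perm.mul_apply]
    exact (hg _).symm
  have horbit : ∀ {x}, Connected f g r x → ∃ k : ℤ, ((G * F) ^ k) r = x := fun {x} h => by
    refine h.mem_of_mapsTo (S := Set.range fun k : ℤ => ((G * F) ^ k) r) hf hg ?_ ?_ ⟨0, rfl⟩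
    · rintro _ ⟨k, rfl⟩
      exact ⟨_, (hF k).symm⟩
    · rintro _ ⟨k, rfl⟩
      exact ⟨_, (hG k).symm⟩
  have hperiod : ∀ {a b : ℤ}, ((G * F) ^ a) r = ((G * F) ^ b) r →
      (MulAction.period (G * F) r : ℤ) ∣ b - a := fun {a b} h => by
    rw [← MulAction.zpow_smul_eq_iff_period_dvd, Equiv.Perm.smul_def, sub_eq_neg_add, zpow_add,
      Equiv.Perm.mul_apply, ← h, ← Equiv.Perm.mul_apply, ← zpow_add, neg_add_cancel, zpow_zero,
      Equiv.Perm.one_apply]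
  obtain ⟨j, rfl⟩ := horbit hrp
  obtain ⟨k, rfl⟩ := horbit hrs
  have hodd := hperiod ((hF j).symm.trans hp)
  have heven := hperiod ((hG k).symm.trans hs)
  have hk : (MulAction.period (G * F) r : ℤ) ∣ k := by
    have h := (hodd.mul_left k).sub (heven.mul_left j)
    rwa [show k * (j - -(j + 1)) - j * (k - -k) = k by ring] at h
  exact (MulAction.zpow_smul_eq_iff_period_dvd.2 hk).symm

end Dihedral

section RankTwo

variable {α : Type*} [LinearOrder α] {f g : α → α} {p q r s : α}

theorem rankIn_pair_left (hpq : p < q) : rankIn {p, q} p = 0 := by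
  rw [rankIn, card_eq_zero, filter_eq_empty_iff]
  grind

theorem rankIn_pair_right (hpq : p < q) : rankIn {p, q} q = 1 := by
  rw [rankIn, card_eq_one]
  exact ⟨p, by grind⟩

variable [Fintype α]

theorem isTransversal_iff_of_defects_eq_pair (hpq : p < q) (hrs : r < s) (hdf : defects f = {p, q})
    (hdg : defects g = {r, s}) {i j : α} :
    IsTransversal f g i j ↔ i = p ∧ j = r ∨ i = q ∧ j = s := by
  rw [IsTransversal, ← mem_defects, ← mem_defects, hdf, hdg, mem_insert, mem_singleton,
    mem_insert, mem_singleton]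
  constructor
  · rintro ⟨rfl | rfl, rfl | rfl, h⟩ <;>
      simp_all [rankIn_pair_left, rankIn_pair_right]
  · rintro (⟨rfl, rfl⟩ | ⟨rfl, rfl⟩) <;>
      simp [rankIn_pair_left, rankIn_pair_right, hpq, hrs]

namespace IsHalfDiagram

open Classical in
theorem connected_indicator_sub (hf : IsHalfDiagram f) (hg : IsHalfDiagram g) (hpq : p < q)
    (hrs : r < s) (hdf : defects f = {p, q}) (hdg : defects g = {r, s}) (i : α) :
    ((if Connected f g i p then 1 else 0) - if Connected f g i q then 1 else 0 : ℤ) =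
      (if Connected f g i r then 1 else 0) - if Connected f g i s then 1 else 0 := by
  simpa [hdf, hdg, sum_filter, sum_pair hpq.ne, sum_pair hrs.ne, rankIn_pair_left hpq,
    rankIn_pair_right hpq, rankIn_pair_left hrs, rankIn_pair_right hrs, sub_eq_add_neg,
    apply_ite Neg.neg] using hf.sum_defects_connected hg i

theorem isIdempotentPair_iff_connected (hf : IsHalfDiagram f) (hg : IsHalfDiagram g)
    (hpq : p < q) (hrs : r < s) (hdf : defects f = {p, q}) (hdg : defects g = {r, s}) :
    IsIdempotentPair f g ↔ Connected f g r p := by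
  have htrans {i j} := isTransversal_iff_of_defects_eq_pair (i := i) (j := j) hpq hrs hdf hdg
  refine ⟨fun h => (h.connected p r (htrans.2 (.inl ⟨rfl, rfl⟩))).symm, fun hrp => ?_⟩
  have hg_fixed : ∀ {i}, g i = i ↔ i = r ∨ i = s := fun {i} => by
    rw [← mem_defects, hdg, mem_insert, mem_singleton]
  have hrs_not : ¬Connected f g r s := fun hrs' =>
    hrs.ne (eq_of_connected_of_apply_eq_self hf.involutive hg.involutive
      (mem_defects.1 (by simp [hdf])) (hg_fixed.2 (.inl rfl)) (hg_fixed.2 (.inr rfl)) hrp hrs')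
  have hsq : Connected f g s q := by
    have hsum := hf.connected_indicator_sub hg hpq hrs hdf hdg s
    have hsp : ¬Connected f g s p := fun h => hrs_not (hrp.trans h.symm)
    have hsr : ¬Connected f g s r := fun h => hrs_not h.symm
    by_contra hsq
    simp [hsp, hsr, hsq, Connected.refl] at hsum
  constructor
  · intro i j hij
    obtain ⟨rfl, rfl⟩ | ⟨rfl, rfl⟩ := htrans.1 hij
    exacts [hrp.symm, hsq.symm]
  · intro i j hi hj hij
    obtain rfl | rfl := hg_fixed.1 hi <;> obtain rfl | rfl := hg_fixed.1 hj
    exacts [rfl, (hrs_not hij).elim, (hrs_not hij.symm).elim, rfl]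

theorem defects_comp_swap (hf : IsHalfDiagram f) (hdf : defects f = ∅) (hp : IsReturn f p q) :
    defects (f ∘ Equiv.swap p q) = {p, q} := by
  ext i
  have hi : f i ≠ i := fun h => by simpa [hdf] using mem_defects.2 h
  rw [mem_defects, comp_swap_apply_eq_self_iff_of_arc hp.2.1 (hp.apply_right hf.involutive),
    mem_insert, mem_singleton, or_iff_right hi]

theorem isIdempotentPair_comp_swap_iff (hf : IsHalfDiagram f) (hg : IsHalfDiagram g)
    (hdf : defects f = ∅) (hdg : defects g = ∅) (hp : IsReturn f p q) (hr : IsReturn g r s) :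
    IsIdempotentPair (f ∘ Equiv.swap p q) (g ∘ Equiv.swap r s) ↔ Connected f g p r := by
  have hf' := hf.comp_swap_of_isReturn hp
  have hg' := hg.comp_swap_of_isReturn hr
  have hdf' := hf.defects_comp_swap hdf hp
  have hdg' := hg.defects_comp_swap hdg hr
  rw [hf'.isIdempotentPair_iff_connected hg' hp.1 hr.1 hdf' hdg', connected_comm (i := p)]
  refine ⟨fun h => ?_, fun h => ?_⟩
  · have hpq : Connected f g r p ↔ Connected f g r q := by rw [← hp.2.1, connected_left_iff]
    have hrs : Connected f g r r ↔ Connected f g r s := by rw [← hr.2.1, connected_right_iff]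
    exact h.mem_of_mapsTo (S := component f g r) hf'.involutive hg'.involutive
      (.comp (fun _ => connected_left_iff.2) (Equiv.swap_bijOn_self hpq).mapsTo)
      (.comp (fun _ => connected_right_iff.2) (Equiv.swap_bijOn_self hrs).mapsTo) (.refl r)
  · by_contra hrp
    have hsum := hf'.connected_indicator_sub hg' hp.1 hr.1 hdf' hdg' r
    have hrr : Connected (f ∘ Equiv.swap p q) (g ∘ Equiv.swap r s) r r := .refl r
    rw [if_neg hrp, if_pos hrr] at hsum
    have hs : Connected (f ∘ Equiv.swap p q) (g ∘ Equiv.swap r s) r s := by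
      by_contra hs
      rw [if_neg hs] at hsum
      split_ifs at hsum <;> norm_num at hsum
    have hq : ¬Connected (f ∘ Equiv.swap p q) (g ∘ Equiv.swap r s) r q := fun hq => by
      rw [if_pos hs, if_pos hq] at hsum
      norm_num at hsum
    let S := component (f ∘ Equiv.swap p q) (g ∘ Equiv.swap r s) r
    have hSf : Set.MapsTo f S S := by
      rw [← comp_swap_comp_swap f p q]
      exact .comp (fun _ => connected_left_iff.2)
        (Equiv.swap_bijOn_self (iff_of_false hrp hq)).mapsTo
    have hSg : Set.MapsTo g S S := by
      rw [← comp_swap_comp_swap g r s]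
      exact .comp (fun _ => connected_right_iff.2)
        (Equiv.swap_bijOn_self (iff_of_true hrr hs)).mapsTo
    exact hrp (h.mem_of_mapsTo hf.involutive hg.involutive hSf hSg hrr)

end IsHalfDiagram

end RankTwo

/-! ### Counting idempotents -/

section CutReturns

variable {α : Type*} [LinearOrder α] [Fintype α] {f : α → α} {p q : α}

theorem mem_halfDiagrams_zero : f ∈ halfDiagrams α 0 ↔ IsHalfDiagram f ∧ defects f = ∅ := by
  rw [mem_halfDiagrams, card_eq_zero]

theorem comp_swap_mem_halfDiagrams_two (hf : f ∈ halfDiagrams α 0) (h : IsReturn f p q) :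
    f ∘ Equiv.swap p q ∈ halfDiagrams α 2 := by
  obtain ⟨hf, hdf⟩ := mem_halfDiagrams_zero.1 hf
  rw [mem_halfDiagrams, hf.defects_comp_swap hdf h, card_pair h.1.ne]
  exact ⟨hf.comp_swap_of_isReturn h, rfl⟩

theorem exists_comp_swap_of_mem_halfDiagrams_two (hf : f ∈ halfDiagrams α 2) :
    ∃ f₀ ∈ halfDiagrams α 0, ∃ p q, IsReturn f₀ p q ∧ f₀ ∘ Equiv.swap p q = f := by
  obtain ⟨hf, hcard⟩ := mem_halfDiagrams.1 hf
  obtain ⟨p, q, hpq, hdf⟩ : ∃ p q, p < q ∧ defects f = {p, q} := by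
    obtain ⟨p, q, hpq, hdf⟩ := card_eq_two.1 hcard
    rcases hpq.lt_or_gt with hlt | hlt
    · exact ⟨p, q, hlt, hdf⟩
    · exact ⟨q, p, hlt, hdf.trans (pair_comm p q)⟩
  have hfixed : ∀ {i}, f i = i ↔ i = p ∨ i = q := fun {i} => by
    rw [← mem_defects, hdf, mem_insert, mem_singleton]
  have hp := hfixed.2 (.inl rfl)
  have hq := hfixed.2 (.inr rfl)
  refine ⟨f ∘ Equiv.swap p q, mem_halfDiagrams_zero.2 ⟨?_, ?_⟩, p, q,
    hf.isReturn_comp_swap hp hq hpq, comp_swap_comp_swap f p q⟩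
  · exact hf.comp_swap_of_fixed hp hq hpq fun x hpx hxq hx =>
      (hfixed.1 hx).elim hpx.ne' hxq.ne
  · ext i
    rw [mem_defects, comp_swap_apply_eq_self_iff_of_fixed hp hq hpq.ne, hfixed]
    simp only [notMem_empty, iff_false]
    tauto

theorem sum_halfDiagrams_two {M : Type*} [AddCommMonoid M] (F : (α → α) → M) :
    ∑ f ∈ halfDiagrams α 2, F f =
      ∑ f ∈ halfDiagrams α 0, ∑ r ∈ returns f, F (f ∘ Equiv.swap r.1 r.2) := by
  rw [sum_sigma']
  refine (sum_nbij (fun x : Σ _ : α → α, α × α => x.1 ∘ Equiv.swap x.2.1 x.2.2) ?_ ?_ ?_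
    fun _ _ => rfl).symm
  · rintro ⟨f, r⟩ h
    obtain ⟨hf, hr⟩ := mem_sigma.1 h
    exact comp_swap_mem_halfDiagrams_two hf (mem_returns.1 hr)
  · rintro ⟨f, p, q⟩ h ⟨f', p', q'⟩ h' heq
    simp only [coe_sigma, Set.mem_sigma_iff, mem_coe, mem_returns, mem_halfDiagrams_zero] at h h'
    obtain ⟨⟨hf, hdf⟩, hr⟩ := h
    obtain ⟨⟨hf', hdf'⟩, hr'⟩ := h'
    dsimp only at heq
    have hpair := hf.defects_comp_swap hdf hr
    rw [heq, hf'.defects_comp_swap hdf' hr'] at hpair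
    obtain ⟨rfl, rfl⟩ : p' = p ∧ q' = q :=
      (Set.pair_eq_pair_iff.1 (by simpa using congrArg ((↑) : _ → Set α) hpair)).resolve_right
        fun h => hr.1.asymm (h.1 ▸ h.2 ▸ hr'.1)
    rw [← comp_swap_comp_swap f p' q', heq, comp_swap_comp_swap]
  · intro f hf
    obtain ⟨f₀, hf₀, p, q, hr, rfl⟩ := exists_comp_swap_of_mem_halfDiagrams_two hf
    exact ⟨⟨f₀, p, q⟩, by simpa using ⟨hf₀, hr⟩, rfl⟩

end CutReturns

section IdempotentPairs

variable {n t : ℕ}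

open Classical in
/-- The pairs of half diagrams with `t` defects that make up an idempotent of the Jones monoid. -/
noncomputable def idempotentPairs (n t : ℕ) : Finset ((Fin n → Fin n) × (Fin n → Fin n)) :=
  {x ∈ halfDiagrams (Fin n) t ×ˢ halfDiagrams (Fin n) t | IsIdempotentPair x.1 x.2}

theorem mem_idempotentPairs {x : (Fin n → Fin n) × (Fin n → Fin n)} :
    x ∈ idempotentPairs n t ↔
      IsJonesPair x.1 x.2 ∧ #(defects x.2) = t ∧ IsIdempotentPair x.1 x.2 := by
  classical
  rw [idempotentPairs, mem_filter, mem_product, mem_halfDiagrams, mem_halfDiagrams]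
  constructor
  · rintro ⟨⟨⟨hf, hdf⟩, hg, hdg⟩, hid⟩
    exact ⟨⟨hf, hg, hdf.trans hdg.symm⟩, hdg, hid⟩
  · rintro ⟨⟨hf, hg, hd⟩, hdg, hid⟩
    exact ⟨⟨⟨hf, hd.trans hdg⟩, hg, hdg⟩, hid⟩

theorem image_idempotentPairs (n t : ℕ) :
    (fun x : (Fin n → Fin n) × (Fin n → Fin n) => ofHalves x.1 x.2) '' idempotentPairs n t =
      {a : PElt n | a ∈ Jones n ∧ pmul a a = a ∧ (numPaths a : ℤ) = t} := by
  ext a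
  simp only [Set.mem_image, mem_coe, mem_idempotentPairs, Set.mem_ofPred_eq, Nat.cast_inj]
  constructor
  · rintro ⟨⟨f, g⟩, ⟨h, hdg, hid⟩, rfl⟩
    exact ⟨h.ofHalves_mem_jones, h.pmul_self_eq_iff.2 hid, (hid.numPaths_eq h).trans hdg⟩
  · rintro ⟨ha, hmul, hpaths⟩
    obtain ⟨f, g, h, rfl⟩ := exists_ofHalves_eq ha
    have hid := h.pmul_self_eq_iff.1 hmul
    exact ⟨(f, g), ⟨h, (hid.numPaths_eq h).symm.trans hpaths, hid⟩, rfl⟩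

theorem injOn_ofHalves_idempotentPairs (n t : ℕ) :
    Set.InjOn (fun x : (Fin n → Fin n) × (Fin n → Fin n) => ofHalves x.1 x.2)
      (idempotentPairs n t) :=
  ofHalves_injOn.mono fun _ hx => (mem_idempotentPairs.1 (mem_coe.1 hx)).1

theorem eJdot_natCast (n t : ℕ) : eJdot n t = #(idempotentPairs n t) := by
  rw [eJdot, ← image_idempotentPairs, Nat.card_image_of_injOn (injOn_ofHalves_idempotentPairs n t),
    Nat.card_coe_set_eq, Set.ncard_coe_finset]

theorem idempotentPairs_of_le_one (ht : t ≤ 1) :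
    idempotentPairs n t = halfDiagrams (Fin n) t ×ˢ halfDiagrams (Fin n) t := by
  classical
  refine filter_true_of_mem fun x hx => ?_
  simp only [mem_product, mem_halfDiagrams] at hx
  obtain ⟨⟨hf, hdf⟩, hg, hdg⟩ := hx
  exact hf.isIdempotentPair_of_card_defects_le_one hg (hdf.trans_le ht) (hdg.trans_le ht)

theorem eJdot_zero (n : ℕ) : eJdot n 0 = aeratedCatalan n ^ 2 := by
  rw [← Nat.cast_zero, eJdot_natCast, idempotentPairs_of_le_one zero_le_one, card_product,
    card_halfDiagrams_zero, Fintype.card_fin, sq]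

theorem eJdot_one (n : ℕ) : eJdot n 1 = aeratedCatalan (n + 1) ^ 2 := by
  rw [← Nat.cast_one, eJdot_natCast, idempotentPairs_of_le_one le_rfl, card_product,
    card_halfDiagrams_one, Fintype.card_fin, sq]

open Classical in
theorem eJdot_two (n : ℕ) :
    eJdot n 2 = ∑ f ∈ halfDiagrams (Fin n) 0, ∑ g ∈ halfDiagrams (Fin n) 0,
      #{x ∈ returns f ×ˢ returns g | Connected f g x.1.1 x.2.1} := by
  rw [← Nat.cast_ofNat, eJdot_natCast, idempotentPairs, card_filter, sum_product,
    sum_halfDiagrams_two]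
  refine sum_congr rfl fun f hf => ?_
  simp only [sum_halfDiagrams_two, card_filter, sum_product]
  rw [sum_comm]
  obtain ⟨hf, hdf⟩ := mem_halfDiagrams_zero.1 hf
  refine sum_congr rfl fun g hg => sum_congr rfl fun r hr => sum_congr rfl fun s hs => ?_
  obtain ⟨hg, hdg⟩ := mem_halfDiagrams_zero.1 hg
  rw [hf.isIdempotentPair_comp_swap_iff hg hdf hdg (mem_returns.1 hr) (mem_returns.1 hs)]

theorem finsum_mem_idempotents_rank_zero {M : Type*} [AddCommMonoid M] (F : PElt n → M) :
    ∑ᶠ a ∈ {a : PElt n | a ∈ Jones n ∧ pmul a a = a ∧ (numPaths a : ℤ) = 0}, F a =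
      ∑ f ∈ halfDiagrams (Fin n) 0, ∑ g ∈ halfDiagrams (Fin n) 0, F (ofHalves f g) := by
  rw [← Nat.cast_zero, ← image_idempotentPairs,
    finsum_mem_image (injOn_ofHalves_idempotentPairs n 0), finsum_mem_coe_finset,
    idempotentPairs_of_le_one zero_le_one, sum_product]

end IdempotentPairs

section Cycles

variable {n : ℕ} {f g : Fin n → Fin n} {θ : Set (Fin n)} {i j : Fin n}

open Classical in
/-- The connected components of the graph formed by the arcs of two half diagrams. -/
noncomputable def components (f g : Fin n → Fin n) : Finset (Set (Fin n)) :=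
  univ.image (component f g)

theorem component_mem_components (f g : Fin n → Fin n) (i : Fin n) :
    component f g i ∈ components f g := mem_image_of_mem _ (mem_univ i)

theorem component_symm (f g : Fin n → Fin n) : component f g = component g f := by
  have h : Connected f g = Connected g f := by
    ext i j
    simp only [Connected, or_comm]
  unfold component
  rw [h]

theorem not_activeDown_ofHalves (hdf : defects f = ∅) (i : Fin n) :
    ¬activeDown (ofHalves f g) i := by
  rintro ⟨j, hj⟩
  rw [ofHalves_rel_inl_inr] at hj
  simpa [hdf] using mem_defects.2 hj.1

theorem not_activeUp_ofHalves (hdf : defects f = ∅) (i : Fin n) :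
    ¬activeUp (ofHalves f g) i := by
  rintro ⟨j, hj⟩
  exact not_activeDown_ofHalves hdf j ⟨i, (ofHalves f g).symm hj⟩

theorem upperReturn_ofHalves_iff (hf : IsHalfDiagram f) (hdf : defects f = ∅) :
    UpperReturn (ofHalves f g) i j ↔ IsReturn f i j := by
  have hrel : ∀ {k l}, k < l → ((ofHalves f g).r (.inl k) (.inl l) ↔ f k = l) := fun hkl => by
    rw [ofHalves_rel_inl_inl hf.involutive, or_iff_right hkl.ne]
  simp only [UpperReturn, not_activeDown_ofHalves hdf, and_false, exists_false,
    not_false_eq_true, and_true, IsReturn]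
  refine and_congr_right fun hij => and_congr (hrel hij) (not_congr ?_)
  exact exists₂_congr fun k l => and_congr_right fun hk => and_congr_right fun hl =>
    hrel (hk.trans (hij.trans hl))

open Classical in
theorem uRet_ofHalves (hf : f ∈ halfDiagrams (Fin n) 0) (hθ : θ ∈ components f g) :
    uRet (ofHalves f g) θ = #{r ∈ returns f | component f g r.1 = θ} := by
  obtain ⟨hf, hdf⟩ := mem_halfDiagrams_zero.1 hf
  obtain ⟨i, -, rfl⟩ := mem_image.1 hθ
  rw [uRet, Nat.card_eq_fintype_card, Fintype.card_subtype]
  congr 1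
  ext ⟨p, q⟩
  simp only [upperReturn_ofHalves_iff hf hdf, mem_filter, mem_univ, true_and, mem_returns,
    component_eq_component_iff]
  constructor
  · rintro ⟨hp, -, hr⟩
    exact ⟨hr, hp.symm⟩
  · rintro ⟨hr, hp⟩
    exact ⟨hp.symm, hr.2.1 ▸ hp.symm.trans (connected_left p), hr⟩

open Classical in
theorem lRet_ofHalves (hg : g ∈ halfDiagrams (Fin n) 0) (hθ : θ ∈ components f g) :
    lRet (ofHalves f g) θ = #{r ∈ returns g | component f g r.1 = θ} := by
  have hdual : lRet (ofHalves f g) θ = uRet (upsideDown (ofHalves f g)) θ := rfl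
  rw [components, component_symm] at hθ
  rw [hdual, upsideDown_ofHalves, uRet_ofHalves hg hθ, component_symm]

theorem thetaSet_ofHalves (hf : f ∈ halfDiagrams (Fin n) 0) (hg : g ∈ halfDiagrams (Fin n) 0) :
    ThetaSet (ofHalves f g) = components f g := by
  obtain ⟨hf, hdf⟩ := mem_halfDiagrams_zero.1 hf
  obtain ⟨hg, hdg⟩ := mem_halfDiagrams_zero.1 hg
  have hlow : ∀ i, hasLow (ofHalves f g) i := fun i =>
    (hasLow_ofHalves_iff hf.involutive).2 fun hi => by simpa [hdf] using mem_defects.2 hi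
  have hup : ∀ i, hasUp (ofHalves f g) i := fun i =>
    (hasUp_ofHalves_iff hg.involutive).2 fun hi => by simpa [hdg] using mem_defects.2 hi
  ext θ
  simp only [ThetaSet, IsCycleComp, LeftOfTrans, hlow, hup, not_activeDown_ofHalves hdf,
    not_activeUp_ofHalves hdf, isComp_ofHalves_iff hf.involutive hg.involutive, components,
    Set.mem_ofPred_eq, coe_image, coe_univ, Set.image_univ, Set.mem_range, or_self,
    IsEmpty.forall_iff, implies_true, and_true]

theorem finsum_thetaSet_add (hf : f ∈ halfDiagrams (Fin n) 0)
    (hg : g ∈ halfDiagrams (Fin n) 0) :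
    ∑ᶠ θ ∈ ThetaSet (ofHalves f g), (uRet (ofHalves f g) θ + lRet (ofHalves f g) θ) =
      #(returns f) + #(returns g) := by
  classical
  have hmaps : ∀ s : Finset (Fin n × Fin n),
      Set.MapsTo (fun r : Fin n × Fin n => component f g r.1) s (components f g) :=
    fun _ r _ => component_mem_components f g r.1
  rw [thetaSet_ofHalves hf hg, finsum_mem_coe_finset, sum_add_distrib,
    card_eq_sum_card_fiberwise (hmaps (returns f)),
    card_eq_sum_card_fiberwise (hmaps (returns g))]
  exact congrArg₂ _ (sum_congr rfl fun θ hθ => uRet_ofHalves hf hθ)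
    (sum_congr rfl fun θ hθ => lRet_ofHalves hg hθ)

open Classical in
theorem finsum_thetaSet_mul (hf : f ∈ halfDiagrams (Fin n) 0)
    (hg : g ∈ halfDiagrams (Fin n) 0) :
    ∑ᶠ q ∈ {q : Set (Fin n) × Set (Fin n) | q.1 ∈ ThetaSet (ofHalves f g) ∧
        q.2 ∈ ThetaSet (ofHalves f g) ∧ q.1 ≠ q.2},
      uRet (ofHalves f g) q.1 * lRet (ofHalves f g) q.2 =
      #{x ∈ returns f ×ˢ returns g | ¬Connected f g x.1.1 x.2.1} := by
  have hpairs : {q : Set (Fin n) × Set (Fin n) | q.1 ∈ ThetaSet (ofHalves f g) ∧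
      q.2 ∈ ThetaSet (ofHalves f g) ∧ q.1 ≠ q.2} = (components f g).offDiag := by
    simp [thetaSet_ofHalves hf hg, Set.ext_iff]
  rw [hpairs, finsum_mem_coe_finset, card_eq_sum_card_fiberwise (t := (components f g).offDiag)
    (f := fun x => (component f g x.1.1, component f g x.2.1))]
  · refine sum_congr rfl fun ⟨θ, η⟩ h => ?_
    obtain ⟨hθ, hη, hne⟩ := mem_offDiag.1 h
    rw [uRet_ofHalves hf hθ, lRet_ofHalves hg hη, ← card_product, ← filter_product,
      filter_filter]
    refine congrArg card (filter_congr fun x _ => ?_)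
    rw [← component_eq_component_iff, Prod.mk.injEq]
    exact ⟨fun h => ⟨h.1 ▸ h.2 ▸ hne, h⟩, fun h => h.2⟩
  · intro x hx
    rw [mem_coe, mem_filter, ← component_eq_component_iff] at hx
    exact mem_offDiag.2 ⟨component_mem_components f g _, component_mem_components f g _, hx.2⟩

theorem S1dot_zero (n : ℕ) :
    S1dot n 0 = ∑ f ∈ halfDiagrams (Fin n) 0, ∑ g ∈ halfDiagrams (Fin n) 0,
      (#(returns f) + #(returns g)) := by
  rw [S1dot, finsum_mem_idempotents_rank_zero]
  exact sum_congr rfl fun f hf => sum_congr rfl fun g hg => finsum_thetaSet_add hf hg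

open Classical in
theorem S2dot_zero (n : ℕ) :
    S2dot n 0 = ∑ f ∈ halfDiagrams (Fin n) 0, ∑ g ∈ halfDiagrams (Fin n) 0,
      #{x ∈ returns f ×ˢ returns g | ¬Connected f g x.1.1 x.2.1} := by
  rw [S2dot, finsum_mem_idempotents_rank_zero]
  exact sum_congr rfl fun f hf => sum_congr rfl fun g hg => finsum_thetaSet_mul hf hg

theorem eJdot_succ_one (n : ℕ) :
    eJdot (n + 1) 1 = eJdot n 0 + S1dot n 0 + S2dot n 0 + eJdot n 2 := by
  classical
  have hreturns := sum_card_returns (α := Fin n)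
  rw [Fintype.card_fin] at hreturns
  have hzero : eJdot n 0 = ∑ f ∈ halfDiagrams (Fin n) 0, ∑ g ∈ halfDiagrams (Fin n) 0, 1 := by
    simp [eJdot_zero, card_halfDiagrams_zero, sq]
  rw [eJdot_one, ← hreturns, sq, sum_mul_sum, hzero, S1dot_zero, S2dot_zero, eJdot_two]
  simp only [← sum_add_distrib]
  refine sum_congr rfl fun f _ => sum_congr rfl fun g _ => ?_
  rw [add_assoc _ (#(filter _ _)), add_comm (#(filter _ _)),
    card_filter_add_card_filter_not, card_product]
  ring

end Cycles

/-- Corollary 6.2. For all `k ≥ 1`: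
(i) `e_{2k;·,0} = C_k² = e_{2k−1;·,1}`; and
(ii) `e_{2k;·,2} = e_{2k+1;·,1} − e_{2k;·,0} − S⁽¹⁾_{2k;·,0} − S⁽²⁾_{2k;·,0}`. -/
theorem jones_low_rank_counts (k : ℕ) (hk : 1 ≤ k) :
    (eJdot (2 * k) 0 = catalan k ^ 2 ∧ eJdot (2 * k - 1) 1 = catalan k ^ 2) ∧
    (eJdot (2 * k) 2 : ℤ) = (eJdot (2 * k + 1) 1 : ℤ) - (eJdot (2 * k) 0 : ℤ) -
      (S1dot (2 * k) 0 : ℤ) - (S2dot (2 * k) 0 : ℤ) := by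
  refine ⟨⟨?_, ?_⟩, ?_⟩
  · rw [eJdot_zero, aeratedCatalan_two_mul]
  · rw [eJdot_one, Nat.sub_add_cancel (by omega), aeratedCatalan_two_mul]
  · rw [eJdot_succ_one]
    push_cast
    ring
end
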